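/- arXiv:2403.02842 — 3 statements merged into one kernel-verified Lean document; each statement's English description precedes it below -/
import Mathlib

section
/- Let p ∈ [0, 1/2) be a fixed constant. Then asymptotically almost surely, every orientation of the binomial random graph G(n,p) contains a Seymour vertex. -/
open Filter

/-- The outneighbourhood `N1(v)` of `v` in the digraph with arc relation `D`. -/
def outNbr {V : Type*} (D : V → V → Prop) (v : V) : Set V := {w | w ≠ v ∧ D v w}

/-- The inneighbourhood `N⁻(v)` of `v`. -/
def inNbr {V : Type*} (D : V → V → Prop) (v : V) : Set V := {w | w ≠ v ∧ D w v}

/-- The second outneighbourhood `N2(v)` of `v`. -/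
def outNbr2 {V : Type*} (D : V → V → Prop) (v : V) : Set V :=
  {w | w ∉ insert v (outNbr D v) ∧ ∃ u ∈ outNbr D v, D u w}

/-- `v` is a Seymour vertex: `|N2(v)| ≥ |N1(v)|`. -/
def SeymourVertex {V : Type*} (D : V → V → Prop) (v : V) : Prop :=
  (outNbr D v).ncard ≤ (outNbr2 D v).ncard

/-- `v` is a Sullivan vertex: `|N2(v)| ≥ |N⁻(v)|`. -/
def SullivanVertex {V : Type*} (D : V → V → Prop) (v : V) : Prop :=
  (inNbr D v).ncard ≤ (outNbr2 D v).ncard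

/-- An oriented graph: an asymmetric (hence irreflexive and loopless) arc relation. -/
def OrientedGraph {V : Type*} (D : V → V → Prop) : Prop := ∀ u v, D u v → ¬ D v u

/-- `D` is an orientation of the simple graph `G`. -/
def Orients {V : Type*} (D : V → V → Prop) (G : SimpleGraph V) : Prop :=
  OrientedGraph D ∧ ∀ u v, G.Adj u v ↔ (D u v ∨ D v u)

/-- Strong connectivity of a digraph: every vertex reaches every other by a directed path. -/
def StrongConn {V : Type*} (D : V → V → Prop) : Prop := ∀ u v, Relation.ReflTransGen D u v

/-- The number of edges of `G` with one endpoint in `A` and the other in `B`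
(counted via ordered pairs; equals `e(A,B)` for disjoint `A`, `B`). -/
noncomputable def eBtw {V : Type*} (G : SimpleGraph V) (A B : Set V) : ℕ :=
  {p : V × V | p.1 ∈ A ∧ p.2 ∈ B ∧ G.Adj p.1 p.2}.ncard

/-- The number of edges of `G` with both endpoints in `A`. -/
noncomputable def eIn {V : Type*} (G : SimpleGraph V) (A : Set V) : ℕ :=
  {e | e ∈ G.edgeSet ∧ ∀ v ∈ e, v ∈ A}.ncard

open scoped Classical in
/-- The probability that the binomial random graph `G(n,p)` satisfies the property `P`. -/
noncomputable def gnpProb (n : ℕ) (p : ℝ) (P : SimpleGraph (Fin n) → Prop) : ℝ :=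
  ∑ G : SimpleGraph (Fin n),
    if P G then p ^ G.edgeSet.ncard * (1 - p) ^ (n.choose 2 - G.edgeSet.ncard) else 0

/-!
If `v` is not a Seymour vertex, then the out-ball of radius two around `v` has at most twice as many
elements as `v` has outneighbours. Hence, if no vertex is a Seymour vertex, at most `4 e(G)` ordered
pairs are joined by a directed path of length at most two in one direction or the other. For
`G(n,p)` this is about `2 p n² < n²`, so a positive proportion of all pairs is far apart.

This is impossible when `G` has many edges between any two large sets of vertices. Count the
quadruples `(v, u, y, x)` such that `y → u → x` and both `x` and `y` are far apart from `v`. If many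
vertices `v` have large far sets, then there are `Ω(n⁴)` quadruples, since most vertices of a large
set have many in- and outneighbours inside it. But `v` and `u` are never adjacent, so for fixed `x`
and `y` only `o(n²)` pairs `(v, u)` are possible.

Both properties of `G(n,p)`, few edges overall and many edges between large sets, follow from
Hoeffding's inequality, with a union bound over the at most `4 ^ n` pairs of sets for the latter.
-/

open Finset MeasureTheory ProbabilityTheory unitInterval Topology

section Counting

theorem sum_le_card_mul_add_mul_card_filter {ι : Type*} [Fintype ι] {f : ι → ℝ} {M : ℝ}
    (hf : ∀ i, f i ≤ M) {t : ℝ} (ht : 0 ≤ t) :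
    ∑ i, f i ≤ Fintype.card ι * t + M * #{i | t ≤ f i} := by
  have hpoint (i : ι) : f i ≤ t + if t ≤ f i then M else 0 := by
    split_ifs with h
    · linarith [hf i]
    · linarith
  calc ∑ i, f i ≤ ∑ i, (t + if t ≤ f i then M else 0) := sum_le_sum fun i _ => hpoint i
    _ = Fintype.card ι * t + M * #{i | t ≤ f i} := by
        rw [sum_add_distrib, ← sum_filter]
        simp [mul_comm]

/-- Both sides count the quadruples `(v, u, y, x)` with `R v y`, `R v x`, `S y u` and `T u x`. -/
theorem sum_sum_card_mul_card_comm {V : Type*} [Fintype V] (R S T : V → V → Prop)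
    [DecidableRel R] [DecidableRel S] [DecidableRel T] :
    ∑ v, ∑ u, #{y ∈ ({w | R v w} : Finset V) | S y u} * #{x ∈ ({w | R v w} : Finset V) | T u x} =
      ∑ y, ∑ x, #{v | R v y ∧ R v x} * #{u | S y u ∧ T u x} := by
  let r (a b : V × V) : Prop := (R a.1 b.1 ∧ R a.1 b.2) ∧ (S b.1 a.2 ∧ T a.2 b.2)
  have habove (a : V × V) : #(univ.bipartiteAbove r a) =
      #{y ∈ ({w | R a.1 w} : Finset V) | S y a.2} *
        #{x ∈ ({w | R a.1 w} : Finset V) | T a.2 x} := by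
    rw [← card_product]
    congr 1
    ext b
    simp only [r, mem_bipartiteAbove, mem_product, mem_filter, mem_univ, true_and]
    tauto
  have hbelow (b : V × V) : #(univ.bipartiteBelow r b) =
      #{v | R v b.1 ∧ R v b.2} * #{u | S b.1 u ∧ T u b.2} := by
    rw [← card_product]
    congr 1
    ext a
    simp only [r, mem_bipartiteBelow, mem_product, mem_filter, mem_univ, true_and]
  have hcount := sum_card_bipartiteAbove_eq_sum_card_bipartiteBelow (s := univ) (t := univ) r
  simpa only [habove, hbelow, Fintype.sum_prod_type] using hcount

end Counting

section Digraph

variable {V : Type*}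

/-- `w` can be reached from `v` by a directed path of length at most two. -/
def WithinTwo (D : V → V → Prop) (v w : V) : Prop :=
  w = v ∨ D v w ∨ ∃ u, D v u ∧ D u w

/-- Neither of `v` and `w` can be reached from the other by a directed path of length at most
two. A pair that is not far apart is counted in the out-ball of radius two around one of its
members. -/
def FarApart (D : V → V → Prop) (v w : V) : Prop :=
  ¬ WithinTwo D v w ∧ ¬ WithinTwo D w v

instance [Fintype V] [DecidableEq V] (D : V → V → Prop) [DecidableRel D] :
    DecidableRel (WithinTwo D) :=
  fun v w => inferInstanceAs (Decidable (w = v ∨ D v w ∨ ∃ u, D v u ∧ D u w))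

instance [Fintype V] [DecidableEq V] (D : V → V → Prop) [DecidableRel D] :
    DecidableRel (FarApart D) :=
  fun v w => inferInstanceAs (Decidable (¬ WithinTwo D v w ∧ ¬ WithinTwo D w v))

theorem setOf_withinTwo_eq (D : V → V → Prop) (v : V) :
    {w | WithinTwo D v w} = insert v (outNbr D v) ∪ outNbr2 D v := by
  ext w
  simp only [WithinTwo, outNbr, outNbr2, Set.mem_ofPred_eq, Set.mem_union, Set.mem_insert_iff]
  grind

theorem seymourVertex_of_outNbr_eq_empty {D : V → V → Prop} {v : V} (h : outNbr D v = ∅) :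
    SeymourVertex D v := by
  simp [SeymourVertex, h]

theorem Orients.seymourVertex_of_bot {D : V → V → Prop} (hD : Orients D ⊥) (v : V) :
    SeymourVertex D v :=
  seymourVertex_of_outNbr_eq_empty <| Set.eq_empty_of_forall_notMem fun w hw =>
    (hD.2 v w).2 (.inl hw.2)

theorem eBtw_coe_eq_card_interedges (G : SimpleGraph V) [DecidableRel G.Adj] (X Y : Finset V) :
    eBtw G X Y = #(G.interedges X Y) := by
  rw [eBtw, ← Set.ncard_coe_finset]
  congr 1
  ext q
  simp [SimpleGraph.mem_interedges_iff]

theorem eBtw_coe_eq_sum (G : SimpleGraph V) [DecidableRel G.Adj] (X Y : Finset V) :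
    eBtw G X Y = ∑ x ∈ X, #{y ∈ Y | G.Adj x y} := by
  simp only [eBtw_coe_eq_card_interedges, SimpleGraph.interedges_def, card_filter, sum_product]

theorem Orients.swap {D : V → V → Prop} {G : SimpleGraph V} (hD : Orients D G) :
    Orients (fun u v => D v u) G :=
  ⟨fun u v => hD.1 v u, fun u v => (hD.2 u v).trans or_comm⟩

theorem Orients.eBtw_self {D : V → V → Prop} [DecidableRel D] {G : SimpleGraph V}
    (hD : Orients D G) (X : Finset V) :
    eBtw G X X = 2 * ∑ u ∈ X, #{x ∈ X | D u x} := by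
  classical
  have hsplit (u : V) : #{x ∈ X | G.Adj u x} = #{x ∈ X | D u x} + #{x ∈ X | D x u} := by
    simp only [hD.2]
    rw [filter_or, card_union_of_disjoint (disjoint_filter.2 fun x _ => hD.1 u x)]
  have hswap : ∑ u ∈ X, #{x ∈ X | D x u} = ∑ u ∈ X, #{x ∈ X | D u x} :=
    (sum_card_bipartiteAbove_eq_sum_card_bipartiteBelow D).symm
  rw [eBtw_coe_eq_sum, sum_congr rfl fun u _ => hsplit u, sum_add_distrib, hswap, two_mul]

theorem Orients.sum_card_eq_ncard_edgeSet [Fintype V] {D : V → V → Prop} [DecidableRel D]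
    {G : SimpleGraph V} (hD : Orients D G) :
    ∑ v, #{w | D v w} = G.edgeSet.ncard := by
  classical
  have hdeg : ∑ v, G.degree v = 2 * ∑ v, #{w | D v w} := by
    rw [← hD.eBtw_self univ, eBtw_coe_eq_sum]
    exact sum_congr rfl fun v _ => by
      rw [← G.card_neighborFinset_eq_degree, G.neighborFinset_eq_filter]
  rw [G.sum_degrees_eq_twice_card_edges, ← Set.ncard_coe_finset, G.coe_edgeFinset] at hdeg
  lia

/-- A vertex `v` and a vertex `u` on a directed path `y → u → x` cannot be adjacent: either
orientation of the edge would give a path of length two between `v` and one of `x`, `y`. -/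
theorem Orients.not_adj_of_farApart {D : V → V → Prop} {G : SimpleGraph V} (hD : Orients D G)
    {v u x y : V} (hy : FarApart D v y) (hx : FarApart D v x) (hyu : D y u) (hux : D u x) :
    ¬ G.Adj v u := by
  rw [hD.2]
  rintro (hvu | huv)
  · exact hx.1 (.inr (.inr ⟨u, hvu, hux⟩))
  · exact hy.2 (.inr (.inr ⟨u, hyu, huv⟩))

end Digraph

section NoSeymourVertex

variable {V : Type*} [Fintype V] [DecidableEq V] {D : V → V → Prop} [DecidableRel D]

theorem card_withinTwo_le_of_not_seymourVertex {v : V} (hv : ¬ SeymourVertex D v) :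
    #{w | WithinTwo D v w} ≤ 2 * #{w | D v w} := by
  have hball : #{w | WithinTwo D v w} = (insert v (outNbr D v) ∪ outNbr2 D v).ncard := by
    rw [← setOf_withinTwo_eq, ← Set.ncard_coe_finset, coe_filter_univ]
  have hout : (outNbr D v).ncard ≤ #{w | D v w} := by
    rw [← Set.ncard_coe_finset]
    exact Set.ncard_le_ncard fun w hw => by simpa using hw.2
  have hunion := Set.ncard_union_le (insert v (outNbr D v)) (outNbr2 D v)
  have hinsert := Set.ncard_insert_le v (outNbr D v)
  rw [SeymourVertex] at hv
  lia

theorem card_le_card_farApart_add_card_withinTwo (v : V) :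
    Fintype.card V ≤
      #{w | FarApart D v w} + (#{w | WithinTwo D v w} + #{w | WithinTwo D w v}) := by
  have hcover : (univ : Finset V) ⊆ ({w | FarApart D v w} : Finset V) ∪
      (({w | WithinTwo D v w} : Finset V) ∪ ({w | WithinTwo D w v} : Finset V)) := by
    intro w _
    simp only [mem_union, mem_filter_univ]
    grind [FarApart]
  calc Fintype.card V ≤ _ := card_le_card hcover
    _ ≤ _ := (card_union_le _ _).trans (Nat.add_le_add_left (card_union_le _ _) _)

theorem Orients.sq_card_le_of_forall_not_seymourVertex {G : SimpleGraph V} (hD : Orients D G)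
    (hS : ∀ v, ¬ SeymourVertex D v) :
    Fintype.card V ^ 2 ≤ ∑ v, #{w | FarApart D v w} + 4 * G.edgeSet.ncard := by
  have hout : ∑ v, #{w | WithinTwo D v w} ≤ 2 * G.edgeSet.ncard := by
    rw [← hD.sum_card_eq_ncard_edgeSet, mul_sum]
    exact sum_le_sum fun v _ => card_withinTwo_le_of_not_seymourVertex (hS v)
  have hin : ∑ v, #{w | WithinTwo D w v} = ∑ v, #{w | WithinTwo D v w} :=
    (sum_card_bipartiteAbove_eq_sum_card_bipartiteBelow (WithinTwo D)).symm
  calc Fintype.card V ^ 2 = ∑ _v : V, Fintype.card V := by simp [sq]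
    _ ≤ ∑ v, (#{w | FarApart D v w} + (#{w | WithinTwo D v w} + #{w | WithinTwo D w v})) :=
        sum_le_sum fun v _ => card_le_card_farApart_add_card_withinTwo v
    _ ≤ ∑ v, #{w | FarApart D v w} + 4 * G.edgeSet.ncard := by
        rw [sum_add_distrib, sum_add_distrib, hin]
        lia

end NoSeymourVertex

section LowerDense

variable {V : Type*} [Fintype V]

/-- Any two sets of at least `ε |V|` vertices, disjoint or not, span at least a proportion `d` of
the possible adjacent pairs. In this form one property serves both for finding many arcs inside
a large set and for excluding large pairs of sets without edges between them. -/
def IsLowerDense (G : SimpleGraph V) (ε d : ℝ) : Prop :=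
  ∀ X Y : Finset V, ε * Fintype.card V ≤ #X → ε * Fintype.card V ≤ #Y →
    d * (#X * #Y) ≤ eBtw G X Y

variable {G : SimpleGraph V} {ε d α : ℝ}

theorem IsLowerDense.card_mul_card_le_of_forall_not_adj (hG : IsLowerDense G ε d) (hε : 0 ≤ ε)
    (hd : 0 < d) {X Y : Finset V} (hXY : ∀ x ∈ X, ∀ y ∈ Y, ¬ G.Adj x y) :
    (#X * #Y : ℝ) ≤ ε * Fintype.card V ^ 2 := by
  have hXV : (#X : ℝ) ≤ Fintype.card V := mod_cast card_le_univ X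
  have hYV : (#Y : ℝ) ≤ Fintype.card V := mod_cast card_le_univ Y
  rcases lt_or_ge (#X : ℝ) (ε * Fintype.card V) with hX | hX
  · calc (#X * #Y : ℝ) ≤ ε * Fintype.card V * Fintype.card V := by gcongr
      _ = ε * Fintype.card V ^ 2 := by ring
  rcases lt_or_ge (#Y : ℝ) (ε * Fintype.card V) with hY | hY
  · calc (#X * #Y : ℝ) ≤ Fintype.card V * (ε * Fintype.card V) := by gcongr
      _ = ε * Fintype.card V ^ 2 := by ring
  have hnone : eBtw G X Y = 0 := by
    classical
    rw [eBtw_coe_eq_sum]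
    exact sum_eq_zero fun x hx => card_eq_zero.2 (filter_eq_empty_iff.2 fun y hy => hXY x hx y hy)
  have hzero : d * (#X * #Y) ≤ 0 := by simpa [hnone] using hG X Y hX hY
  exact (nonpos_of_mul_nonpos_right hzero hd).trans (by positivity)

variable {D : V → V → Prop} [DecidableRel D]

theorem IsLowerDense.card_lowOutDegree_le (hG : IsLowerDense G ε d) (hD : Orients D G)
    (hα : 0 ≤ α) (hεα : ε ≤ α) (hd : 0 ≤ d) (Q : Finset V) :
    (#{u ∈ Q | (#{x ∈ Q | D u x} : ℝ) < d * α / 2 * Fintype.card V} : ℝ) ≤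
      α * Fintype.card V := by
  set X : Finset V := {u ∈ Q | (#{x ∈ Q | D u x} : ℝ) < d * α / 2 * Fintype.card V}
  by_contra! hX
  have hXne : X.Nonempty := by
    rw [← card_pos, ← Nat.cast_pos (α := ℝ)]
    exact hX.trans_le' (by positivity)
  have harcs : ∑ u ∈ X, (#{x ∈ X | D u x} : ℝ) < #X * (d * α / 2 * Fintype.card V) := by
    rw [← nsmul_eq_mul, ← sum_const]
    refine sum_lt_sum_of_nonempty hXne fun u hu => (mem_filter.1 hu).2.trans_le' ?_
    exact mod_cast card_le_card (filter_subset_filter _ (filter_subset _ _))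
  have hεX : ε * Fintype.card V ≤ #X := hX.le.trans' (by gcongr)
  have hdense := hG X X hεX hεX
  rw [hD.eBtw_self X] at hdense
  push_cast at hdense
  have hmono : d * (#X * (α * Fintype.card V)) ≤ d * (#X * #X : ℝ) := by gcongr
  linarith

theorem IsLowerDense.le_sum_inDegree_mul_outDegree (hG : IsLowerDense G ε d) (hD : Orients D G)
    (hα : 0 ≤ α) (hεα : ε ≤ α) (hd : 0 ≤ d) {Q : Finset V}
    (hQ : 4 * α * Fintype.card V ≤ #Q) :
    2 * α * Fintype.card V * (d * α / 2 * Fintype.card V) ^ 2 ≤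
      ∑ u, (#{y ∈ Q | D y u} * #{x ∈ Q | D u x} : ℝ) := by
  classical
  set k : ℝ := d * α / 2 * Fintype.card V with hk
  have hk0 : 0 ≤ k := by positivity
  set P : Finset V := {u ∈ Q | k ≤ (#{y ∈ Q | D y u} : ℝ) ∧ k ≤ (#{x ∈ Q | D u x} : ℝ)} with hP
  set lowOut : Finset V := {u ∈ Q | (#{x ∈ Q | D u x} : ℝ) < k} with hlowOut
  set lowIn : Finset V := {u ∈ Q | (#{y ∈ Q | D y u} : ℝ) < k} with hlowIn
  have hcover : Q ⊆ P ∪ (lowOut ∪ lowIn) := by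
    intro u hu
    simp only [hP, hlowOut, hlowIn, mem_union, mem_filter, hu, true_and, ← not_le]
    tauto
  have hcard : (#Q : ℝ) ≤ #P + (#lowOut + #lowIn) := mod_cast (card_le_card hcover).trans
    ((card_union_le _ _).trans (Nat.add_le_add_left (card_union_le _ _) _))
  have hOut : #lowOut ≤ α * Fintype.card V := hG.card_lowOutDegree_le hD hα hεα hd Q
  have hIn : #lowIn ≤ α * Fintype.card V := hG.card_lowOutDegree_le hD.swap hα hεα hd Q
  calc 2 * α * Fintype.card V * k ^ 2 ≤ #P * k ^ 2 := by gcongr; linarith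
    _ = ∑ _u ∈ P, k * k := by rw [sum_const, nsmul_eq_mul, sq]
    _ ≤ ∑ u ∈ P, (#{y ∈ Q | D y u} * #{x ∈ Q | D u x} : ℝ) := sum_le_sum fun _ hu =>
        mul_le_mul (mem_filter.1 hu).2.1 (mem_filter.1 hu).2.2 hk0 (Nat.cast_nonneg _)
    _ ≤ ∑ u, (#{y ∈ Q | D y u} * #{x ∈ Q | D u x} : ℝ) :=
        sum_le_univ_sum_of_nonneg fun _ => by positivity

end LowerDense

section FarApart

variable {V : Type*} [Fintype V] [DecidableEq V] {D : V → V → Prop} [DecidableRel D]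
  {G : SimpleGraph V} {ε d α : ℝ}

theorem IsLowerDense.sum_sum_farApart_le (hG : IsLowerDense G ε d) (hD : Orients D G)
    (hε : 0 ≤ ε) (hd : 0 < d) :
    ∑ v, ∑ u, (#{y ∈ ({w | FarApart D v w} : Finset V) | D y u} *
        #{x ∈ ({w | FarApart D v w} : Finset V) | D u x} : ℝ) ≤
      ε * Fintype.card V ^ 4 := by
  calc _ = ∑ y, ∑ x, (#{v | FarApart D v y ∧ FarApart D v x} * #{u | D y u ∧ D u x} : ℝ) :=
        mod_cast sum_sum_card_mul_card_comm (FarApart D) D D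
    _ ≤ ∑ _y : V, ∑ _x : V, ε * Fintype.card V ^ 2 := by
        refine sum_le_sum fun y _ => sum_le_sum fun x _ =>
          hG.card_mul_card_le_of_forall_not_adj hε hd fun v hv u hu => ?_
        rw [mem_filter_univ] at hv hu
        exact hD.not_adj_of_farApart hv.1 hv.2 hu.1 hu.2
    _ = ε * Fintype.card V ^ 4 := by
        simp only [sum_const, card_univ, nsmul_eq_mul]
        ring

theorem IsLowerDense.sum_card_farApart_lt [Nonempty V] (hG : IsLowerDense G ε d)
    (hD : Orients D G) (hε : 0 ≤ ε) (hd : 0 < d) (hεα : ε ≤ α)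
    (hεd : ε < 2 * d ^ 2 * α ^ 4) :
    ∑ v, (#{w | FarApart D v w} : ℝ) < 8 * α * Fintype.card V ^ 2 := by
  by_contra! hfar
  have hα : 0 ≤ α := hε.trans hεα
  have hn : (0 : ℝ) < Fintype.card V := mod_cast Fintype.card_pos
  set far : V → Finset V := fun v => {w | FarApart D v w} with hfar_def
  set L : Finset V := {v | 4 * α * Fintype.card V ≤ (#(far v) : ℝ)} with hL
  have hLcard : 4 * α * Fintype.card V ≤ #L := by
    have hsum := sum_le_card_mul_add_mul_card_filter (f := fun v => (#(far v) : ℝ))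
      (M := Fintype.card V) (fun v => mod_cast card_le_univ _)
      (t := 4 * α * Fintype.card V) (by positivity)
    refine le_of_mul_le_mul_left ?_ hn
    linarith
  have hlower : 2 * d ^ 2 * α ^ 4 * Fintype.card V ^ 4 ≤
      ∑ v, ∑ u, (#{y ∈ far v | D y u} * #{x ∈ far v | D u x} : ℝ) := by
    calc 2 * d ^ 2 * α ^ 4 * (Fintype.card V : ℝ) ^ 4
        = 4 * α * Fintype.card V *
            (2 * α * Fintype.card V * (d * α / 2 * Fintype.card V) ^ 2) := by ring
      _ ≤ #L * (2 * α * Fintype.card V * (d * α / 2 * Fintype.card V) ^ 2) := by gcongr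
      _ = ∑ v ∈ L, 2 * α * Fintype.card V * (d * α / 2 * Fintype.card V) ^ 2 := by
          rw [sum_const, nsmul_eq_mul]
      _ ≤ ∑ v ∈ L, ∑ u, (#{y ∈ far v | D y u} * #{x ∈ far v | D u x} : ℝ) :=
          sum_le_sum fun v hv =>
            hG.le_sum_inDegree_mul_outDegree hD hα hεα hd.le (mem_filter.1 hv).2
      _ ≤ _ := sum_le_univ_sum_of_nonneg fun v => sum_nonneg fun u _ => by positivity
  have hupper := hG.sum_sum_farApart_le hD hε hd
  have hstrict : ε * Fintype.card V ^ 4 < 2 * d ^ 2 * α ^ 4 * (Fintype.card V : ℝ) ^ 4 := by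
    gcongr
  exact (hlower.trans hupper).not_gt hstrict

end FarApart

theorem IsLowerDense.exists_seymourVertex {V : Type*} [Fintype V] [Nonempty V]
    {G : SimpleGraph V} {ε d α : ℝ} (hG : IsLowerDense G ε d) (hε : 0 ≤ ε) (hd : 0 < d)
    (hεα : ε ≤ α) (hεd : ε < 2 * d ^ 2 * α ^ 4)
    (hedges : 4 * G.edgeSet.ncard ≤ (1 - 8 * α) * Fintype.card V ^ 2)
    {D : V → V → Prop} (hD : Orients D G) : ∃ v, SeymourVertex D v := by
  classical
  by_contra! hS
  have hfar := hG.sum_card_farApart_lt hD hε hd hεα hεd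
  have hcount : (Fintype.card V : ℝ) ^ 2 ≤
      ∑ v, (#{w | FarApart D v w} : ℝ) + 4 * G.edgeSet.ncard :=
    mod_cast hD.sq_card_le_of_forall_not_seymourVertex hS
  linarith

theorem exists_pos_forall_isLowerDense_exists_seymourVertex {d r : ℝ} (hd : 0 < d)
    (hr : r < 1 / 2) :
    ∃ ε > 0, ∀ {V : Type*} [Fintype V] [Nonempty V] {G : SimpleGraph V}, IsLowerDense G ε d →
      G.edgeSet.ncard ≤ r / 2 * Fintype.card V ^ 2 →
        ∀ {D : V → V → Prop}, Orients D G → ∃ v, SeymourVertex D v := by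
  set α : ℝ := (1 - 2 * r) / 8 with hα_def
  have hα : 0 < α := by linarith
  have hdα : 0 < d ^ 2 * α ^ 4 := by positivity
  have hε : 0 < min α (d ^ 2 * α ^ 4) := lt_min hα hdα
  refine ⟨_, hε, fun hG hedges _ hD =>
    hG.exists_seymourVertex hε.le hd (min_le_left _ _) ?_ ?_ hD⟩
  · exact (min_le_right _ _).trans_lt (by linarith)
  · rw [hα_def]
    linarith

section Limits

theorem tendsto_exp_neg_mul_choose_two {c : ℝ} (hc : 0 < c) :
    Tendsto (fun n : ℕ => Real.exp (-c * n.choose 2)) atTop (𝓝 0) := by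
  have hchoose : Tendsto (fun n : ℕ => (n.choose 2 : ℝ)) atTop atTop :=
    (isEquivalent_choose 2).symm.tendsto_atTop
      (((tendsto_pow_atTop two_ne_zero).comp tendsto_natCast_atTop_atTop).atTop_div_const (by simp))
  exact Real.tendsto_exp_atBot.comp (hchoose.const_mul_atTop_of_neg (neg_lt_zero.2 hc))

theorem tendsto_pow_mul_exp_neg_mul_sq {a c : ℝ} (ha : 0 < a) (hc : 0 < c) :
    Tendsto (fun n : ℕ => a ^ n * Real.exp (-c * n ^ 2)) atTop (𝓝 0) := by
  have hexp (n : ℕ) : a ^ n * Real.exp (-c * n ^ 2) = Real.exp (n * (-c * n + Real.log a)) := by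
    rw [← Real.exp_log ha, ← Real.exp_nat_mul, ← Real.exp_add, Real.exp_log ha]
    ring_nf
  have hlin : Tendsto (fun n : ℕ => -c * n + Real.log a) atTop atBot :=
    tendsto_atBot_add_const_right _ _
      (tendsto_natCast_atTop_atTop.const_mul_atTop_of_neg (neg_lt_zero.2 hc))
  simp only [hexp]
  exact Real.tendsto_exp_atBot.comp (tendsto_natCast_atTop_atTop.atTop_mul_atBot₀ hlin)

theorem tendsto_measureReal_one_of_compl_subset_union {ι : Type*} {l : Filter ι} {Ω : ι → Type*}
    {_ : ∀ i, MeasurableSpace (Ω i)} {μ : ∀ i, Measure (Ω i)} [∀ i, IsProbabilityMeasure (μ i)]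
    {A B C : ∀ i, Set (Ω i)} (hABC : ∀ᶠ i in l, (A i)ᶜ ⊆ B i ∪ C i)
    (hB : Tendsto (fun i => (μ i).real (B i)) l (𝓝 0))
    (hC : Tendsto (fun i => (μ i).real (C i)) l (𝓝 0)) :
    Tendsto (fun i => (μ i).real (A i)) l (𝓝 1) := by
  have hlower : Tendsto (fun i => 1 - ((μ i).real (B i) + (μ i).real (C i))) l (𝓝 1) := by
    simpa using (hB.add hC).const_sub 1
  refine tendsto_of_tendsto_of_tendsto_of_le_of_le' hlower tendsto_const_nhds ?_
    (.of_forall fun _ => measureReal_le_one)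
  filter_upwards [hABC] with i hi
  have hcover : (1 : ℝ) ≤ (μ i).real (A i) + (μ i).real (A i)ᶜ := by
    rw [← probReal_univ (μ := μ i), ← Set.union_compl_self (A i)]
    exact measureReal_union_le _ _
  linarith [(measureReal_mono hi).trans (measureReal_union_le (μ := μ i) (B i) (C i))]

end Limits

section Bernoulli

variable {ι Ω : Type*} {mΩ : MeasurableSpace Ω} {P : Measure Ω} {X : Ω → Set ι} {u : Set ι}
  {p : I}

theorem hasLaw_mem_setBernoulli (u : Set ι) (p : I) :
    HasLaw (fun (s : Set ι) i => i ∈ s)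
      (Measure.infinitePi fun i => toNNReal p • Measure.dirac (i ∈ u) +
        toNNReal (σ p) • Measure.dirac False) (setBernoulli u p) where
  aemeasurable := by fun_prop
  map_eq := by
    rw [setBernoulli_eq_map, Measure.map_map (by fun_prop) (by fun_prop)]
    exact Measure.map_id

theorem hasLaw_mem_of_isSetBernoulli (hX : IsSetBernoulli X u p P) (i : ι) :
    HasLaw (fun ω => i ∈ X ω)
      (toNNReal p • Measure.dirac (i ∈ u) + toNNReal (σ p) • Measure.dirac False) P :=
  HasLaw.comp (Y := fun f : ι → Prop => f i)
    ⟨(measurable_pi_apply i).aemeasurable, Measure.infinitePi_map_eval _ i⟩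
    ((hasLaw_mem_setBernoulli u p).comp hX)

theorem iIndepFun_mem_of_isSetBernoulli (hX : IsSetBernoulli X u p P) :
    iIndepFun (fun i ω => i ∈ X ω) P := by
  have := hX.isProbabilityMeasure
  have hlaw := (hasLaw_mem_setBernoulli u p).comp hX
  exact (iIndepFun_iff_hasLaw_Pi_infinitePi (hasLaw_mem_of_isSetBernoulli hX)
    hlaw.aemeasurable).2 hlaw

theorem measureReal_mem_of_isSetBernoulli (hX : IsSetBernoulli X u p P) {i : ι} (hi : i ∈ u) :
    P.real {ω | i ∈ X ω} = p := by
  rw [(hasLaw_mem_of_isSetBernoulli hX i).measureReal_eq (p := fun q => q) .of_discrete]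
  simp [measureReal_def, hi]

theorem hasSubgaussianMGF_indicator_mem_sub_of_isSetBernoulli (hX : IsSetBernoulli X u p P)
    {i : ι} (hi : i ∈ u) :
    HasSubgaussianMGF (fun ω => {ω | i ∈ X ω}.indicator 1 ω - (p : ℝ)) (1 / 4) P := by
  have := hX.isProbabilityMeasure
  have hmeas : NullMeasurableSet {ω | i ∈ X ω} P :=
    (hasLaw_mem_of_isSetBernoulli hX i).aemeasurable.nullMeasurable
      (MeasurableSet.of_discrete (s := {q | q}))
  have hmean : P[{ω | i ∈ X ω}.indicator (1 : Ω → ℝ)] = (p : ℝ) := by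
    simp [integral_indicator₀ hmeas, measureReal_mem_of_isSetBernoulli hX hi]
  have hbdd : ∀ᵐ ω ∂P, {ω | i ∈ X ω}.indicator (1 : Ω → ℝ) ω ∈ Set.Icc 0 1 :=
    .of_forall fun ω => by
      by_cases h : i ∈ X ω <;> simp [h]
  have hindicator : AEMeasurable ({ω | i ∈ X ω}.indicator (1 : Ω → ℝ)) P :=
    aemeasurable_one.indicator₀ hmeas
  have hHoeffding := hasSubgaussianMGF_of_mem_Icc hindicator hbdd
  rw [hmean] at hHoeffding
  convert hHoeffding using 1
  norm_num

theorem iIndepFun_indicator_mem_sub_of_isSetBernoulli (hX : IsSetBernoulli X u p P) :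
    iIndepFun (fun i ω => {ω | i ∈ X ω}.indicator 1 ω - (p : ℝ)) P := by
  classical
  exact (iIndepFun_mem_of_isSetBernoulli hX).comp (fun _ q => (if q then 1 else 0) - (p : ℝ))
    fun _ => .of_discrete

theorem sum_indicator_mem_sub_eq (X : Ω → Set ι) (F : Finset ι) (c : ℝ) (ω : Ω) :
    ∑ i ∈ F, ({ω | i ∈ X ω}.indicator 1 ω - c) = ((F : Set ι) ∩ X ω).ncard - c * #F := by
  classical
  have hcard : ((F : Set ι) ∩ X ω).ncard = #{i ∈ F | i ∈ X ω} := by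
    rw [← Set.ncard_coe_finset]
    congr 1
    ext
    simp
  simp [hcard, Set.indicator_apply, sum_boole, mul_comm]

theorem exp_neg_sq_div_eq (δ : ℝ) (F : Finset ι) :
    Real.exp (-(δ * #F) ^ 2 / (2 * ∑ _i ∈ F, (1 / 4 : NNReal))) = Real.exp (-2 * δ ^ 2 * #F) := by
  rcases F.eq_empty_or_nonempty with rfl | hF
  · simp
  have hF0 : (#F : ℝ) ≠ 0 := by simpa using hF.ne_empty
  have hsum : ((∑ _i ∈ F, 1 / 4 : NNReal) : ℝ) = #F / 4 := by
    simp [div_eq_mul_inv]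
  rw [hsum]
  congr 1
  field_simp
  ring

theorem measureReal_le_ncard_inter_le_exp (hX : IsSetBernoulli X u p P) {F : Finset ι}
    (hF : (F : Set ι) ⊆ u) {δ : ℝ} (hδ : 0 ≤ δ) :
    P.real {ω | ((p : ℝ) + δ) * #F ≤ ((F : Set ι) ∩ X ω).ncard} ≤ Real.exp (-2 * δ ^ 2 * #F) := by
  have := hX.isProbabilityMeasure
  have hbound := HasSubgaussianMGF.measure_sum_ge_le_of_iIndepFun
    (iIndepFun_indicator_mem_sub_of_isSetBernoulli hX)
    (fun i hi => hasSubgaussianMGF_indicator_mem_sub_of_isSetBernoulli hX (hF hi))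
    (ε := δ * #F) (by positivity)
  simp only [sum_indicator_mem_sub_eq] at hbound
  rw [exp_neg_sq_div_eq] at hbound
  refine (measureReal_mono fun ω hω => ?_).trans hbound
  rw [Set.mem_ofPred_eq] at hω ⊢
  linarith

theorem measureReal_ncard_inter_le_le_exp (hX : IsSetBernoulli X u p P) {F : Finset ι}
    (hF : (F : Set ι) ⊆ u) {δ : ℝ} (hδ : 0 ≤ δ) :
    P.real {ω | ((F : Set ι) ∩ X ω).ncard ≤ ((p : ℝ) - δ) * #F} ≤ Real.exp (-2 * δ ^ 2 * #F) := by
  have := hX.isProbabilityMeasure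
  have hbound := HasSubgaussianMGF.measure_sum_ge_le_of_iIndepFun
    ((iIndepFun_indicator_mem_sub_of_isSetBernoulli hX).comp (fun _ x => -x)
      fun _ => measurable_neg)
    (fun i hi => (hasSubgaussianMGF_indicator_mem_sub_of_isSetBernoulli hX (hF hi)).neg)
    (ε := δ * #F) (by positivity)
  simp only [Function.comp_apply, sum_neg_distrib, sum_indicator_mem_sub_eq] at hbound
  rw [exp_neg_sq_div_eq] at hbound
  refine (measureReal_mono fun ω hω => ?_).trans hbound
  rw [Set.mem_ofPred_eq] at hω ⊢
  linarith

end Bernoulli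

theorem isSetBernoulli_edgeSet (V : Type*) [Countable V] (p : I) :
    IsSetBernoulli SimpleGraph.edgeSet (Sym2.diagSet : Set (Sym2 V))ᶜ p
      (SimpleGraph.binomialRandom V p) where
  aemeasurable := SimpleGraph.measurable_edgeSet.aemeasurable
  map_eq := by
    rw [SimpleGraph.binomialRandom_eq_map,
      Measure.map_map SimpleGraph.measurable_edgeSet SimpleGraph.measurable_fromEdgeSet]
    refine (Measure.map_congr ?_).trans Measure.map_id
    filter_upwards [setBernoulli_ae_subset] with s hs
    simpa [Set.disjoint_left, Set.subset_def] using hs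

instance (V : Type*) [Countable V] : MeasurableSingletonClass (SimpleGraph V) where
  measurableSet_singleton G := by
    rw [← Set.preimage_image_eq {G} SimpleGraph.edgeSet_injective, Set.image_singleton]
    exact SimpleGraph.measurable_edgeSet (measurableSet_singleton _)

theorem gnpProb_eq_measureReal_binomialRandom (n : ℕ) (p : I) (P : SimpleGraph (Fin n) → Prop) :
    gnpProb n p P = (SimpleGraph.binomialRandom (Fin n) p).real {G | P G} := by
  classical
  rw [gnpProb, ← sum_filter, ← coe_filter_univ, ← sum_measureReal_singleton]
  refine sum_congr rfl fun G _ => ?_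
  simp [measureReal_def]

section CrossEdges

variable {V : Type*} [DecidableEq V]

/-- The edges of the complete graph with one endpoint in `X` and the other in `Y`, as unordered
pairs, so that the events that they are edges of a random graph are independent. -/
def crossEdges (X Y : Finset V) : Finset (Sym2 V) :=
  ((⊤ : SimpleGraph V).interedges X Y).image fun q => s(q.1, q.2)

theorem coe_crossEdges_subset_compl_diagSet (X Y : Finset V) :
    (crossEdges X Y : Set (Sym2 V)) ⊆ Sym2.diagSetᶜ := by
  intro e he
  obtain ⟨q, hq, rfl⟩ := mem_image.1 (mem_coe.1 he)
  simpa using ((SimpleGraph.mem_interedges_iff _).1 hq).2.2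

theorem card_le_two_mul_card_image_sym2 (S : Finset (V × V)) :
    #S ≤ 2 * #(S.image fun q => s(q.1, q.2)) := by
  refine card_le_mul_card_image S 2 fun e _ => ?_
  induction e with | _ x y
  refine (card_le_card fun q hq => ?_).trans (card_le_two (a := (x, y)) (b := (y, x)))
  simpa [Prod.ext_iff] using (mem_filter.1 hq).2

theorem card_filter_product_fst_eq_snd_le (X Y : Finset V) :
    #{q ∈ X ×ˢ Y | q.1 = q.2} ≤ #X := by
  refine card_le_card_of_injOn Prod.fst (fun q hq => ?_) fun q hq q' hq' h => ?_
  · exact (mem_product.1 (mem_filter.1 hq).1).1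
  · exact Prod.ext h ((mem_filter.1 hq).2.symm.trans (h.trans (mem_filter.1 hq').2))

theorem card_mul_card_le_card_add_two_mul_card_crossEdges (X Y : Finset V) :
    #X * #Y ≤ #X + 2 * #(crossEdges X Y) := by
  rw [← card_product, ← card_filter_add_card_filter_not fun q : V × V => q.1 = q.2]
  exact Nat.add_le_add (card_filter_product_fst_eq_snd_le X Y) (card_le_two_mul_card_image_sym2 _)

theorem ncard_crossEdges_inter_edgeSet_le (G : SimpleGraph V) (X Y : Finset V) :
    ((crossEdges X Y : Set (Sym2 V)) ∩ G.edgeSet).ncard ≤ eBtw G X Y := by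
  classical
  rw [eBtw_coe_eq_card_interedges, ← Set.ncard_coe_finset]
  refine (Set.ncard_le_ncard ?_ ?_).trans
    (Set.ncard_image_le (f := fun q : V × V => s(q.1, q.2)) (finite_toSet _))
  · rintro e ⟨he, heG⟩
    obtain ⟨q, hq, rfl⟩ := mem_image.1 (mem_coe.1 he)
    have hmem := (SimpleGraph.mem_interedges_iff _).1 hq
    exact ⟨q, by simpa [SimpleGraph.mem_interedges_iff, hmem] using heG, rfl⟩
  · exact (finite_toSet _).image _

end CrossEdges

section BinomialRandom

theorem measureReal_eBtw_lt_le_exp {V : Type*} [Countable V] {p : I} {X Y : Finset V}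
    (hXY : 2 * #X ≤ #X * #Y) :
    (SimpleGraph.binomialRandom V p).real {G | (eBtw G X Y : ℝ) < p / 8 * (#X * #Y)} ≤
      Real.exp (-(p ^ 2 / 8) * (#X * #Y)) := by
  classical
  have hp : (0 : ℝ) ≤ p := p.2.1
  have hcross : (#X * #Y / 4 : ℝ) ≤ #(crossEdges X Y) := by
    have hnat : #X * #Y ≤ 4 * #(crossEdges X Y) := by
      have := card_mul_card_le_card_add_two_mul_card_crossEdges X Y
      lia
    have : (#X * #Y : ℝ) ≤ 4 * #(crossEdges X Y) := mod_cast hnat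
    linarith
  calc _ ≤ (SimpleGraph.binomialRandom V p).real {G | (((crossEdges X Y : Set (Sym2 V)) ∩
          G.edgeSet).ncard : ℝ) ≤ ((p : ℝ) - p / 2) * #(crossEdges X Y)} := by
        refine measureReal_mono fun G hG => ?_
        calc (((crossEdges X Y : Set (Sym2 V)) ∩ G.edgeSet).ncard : ℝ)
            ≤ eBtw G X Y := mod_cast ncard_crossEdges_inter_edgeSet_le G X Y
          _ ≤ p / 2 * (#X * #Y / 4) := (Set.mem_ofPred_eq ▸ hG).le.trans_eq (by ring)
          _ ≤ ((p : ℝ) - p / 2) * #(crossEdges X Y) := by rw [sub_half]; gcongr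
    _ ≤ Real.exp (-2 * (p / 2 : ℝ) ^ 2 * #(crossEdges X Y)) :=
        measureReal_ncard_inter_le_le_exp (isSetBernoulli_edgeSet V p)
          (coe_crossEdges_subset_compl_diagSet X Y) (by positivity)
    _ ≤ Real.exp (-(p ^ 2 / 8) * (#X * #Y)) := by
        rw [Real.exp_le_exp]
        nlinarith [mul_le_mul_of_nonneg_left hcross (sq_nonneg (p : ℝ))]

variable {V : Type*} [Fintype V] {p : I}

theorem measureReal_le_ncard_edgeSet_le_exp {δ : ℝ} (hδ : 0 ≤ δ) :
    (SimpleGraph.binomialRandom V p).real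
        {G | ((p : ℝ) + δ) * (Fintype.card V).choose 2 ≤ G.edgeSet.ncard} ≤
      Real.exp (-2 * δ ^ 2 * (Fintype.card V).choose 2) := by
  classical
  have hbound := measureReal_le_ncard_inter_le_exp (isSetBernoulli_edgeSet V p)
    (F := (Sym2.diagSetᶜ : Set (Sym2 V)).toFinset) (by simp) hδ
  have hinter (G : SimpleGraph V) : (Sym2.diagSetᶜ : Set (Sym2 V)) ∩ G.edgeSet = G.edgeSet :=
    Set.inter_eq_right.2 G.edgeSet_subset_compl_diagSet
  simpa only [Set.coe_toFinset, hinter, Set.toFinset_card, Sym2.card_diagSet_compl] using hbound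

theorem measureReal_not_isLowerDense_le {ε : ℝ} (hcard : 2 ≤ ε * Fintype.card V) :
    (SimpleGraph.binomialRandom V p).real {G | ¬ IsLowerDense G ε (p / 8)} ≤
      4 ^ Fintype.card V * Real.exp (-(p ^ 2 * ε ^ 2 / 8) * Fintype.card V ^ 2) := by
  classical
  set large : Finset (Finset V × Finset V) :=
    {q | ε * Fintype.card V ≤ #q.1 ∧ ε * Fintype.card V ≤ #q.2} with hlarge
  have hfail (G : SimpleGraph V) (hG : ¬ IsLowerDense G ε (p / 8)) :
      G ∈ ⋃ q ∈ large, {G | (eBtw G q.1 q.2 : ℝ) < p / 8 * (#q.1 * #q.2)} := by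
    simp only [IsLowerDense, not_forall, not_le] at hG
    obtain ⟨X, Y, hX, hY, hXY⟩ := hG
    exact Set.mem_biUnion (x := (X, Y)) (by simp [hlarge, hX, hY]) hXY
  have hpair (q : Finset V × Finset V) (hq : q ∈ large) :
      (SimpleGraph.binomialRandom V p).real {G | (eBtw G q.1 q.2 : ℝ) < p / 8 * (#q.1 * #q.2)} ≤
        Real.exp (-(p ^ 2 * ε ^ 2 / 8) * Fintype.card V ^ 2) := by
    obtain ⟨hX, hY⟩ := (mem_filter.1 hq).2
    have hYtwo : 2 ≤ #q.2 := mod_cast hcard.trans hY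
    refine (measureReal_eBtw_lt_le_exp ((Nat.mul_comm _ _).trans_le (by gcongr))).trans ?_
    rw [Real.exp_le_exp, neg_mul, neg_mul, neg_le_neg_iff]
    calc (p ^ 2 * ε ^ 2 / 8 * Fintype.card V ^ 2 : ℝ)
        = p ^ 2 / 8 * ((ε * Fintype.card V) * (ε * Fintype.card V)) := by ring
      _ ≤ p ^ 2 / 8 * (#q.1 * #q.2) := by gcongr
  have hcount : (#large : ℝ) ≤ 4 ^ Fintype.card V := by
    have hpairs : Fintype.card (Finset V × Finset V) = 4 ^ Fintype.card V := by
      rw [Fintype.card_prod, Fintype.card_finset, ← mul_pow]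
      norm_num
    exact mod_cast hpairs ▸ card_le_univ large
  calc _ ≤ ∑ q ∈ large,
        (SimpleGraph.binomialRandom V p).real {G | (eBtw G q.1 q.2 : ℝ) < p / 8 * (#q.1 * #q.2)} :=
        (measureReal_mono hfail (measure_ne_top _ _)).trans (measureReal_biUnion_finset_le _ _)
    _ ≤ #large * Real.exp (-(p ^ 2 * ε ^ 2 / 8) * Fintype.card V ^ 2) := by
        rw [← nsmul_eq_mul]
        exact sum_le_card_nsmul _ _ _ hpair
    _ ≤ _ := by gcongr

end BinomialRandom

theorem tendsto_measureReal_lt_ncard_edgeSet {p : I} {r : ℝ} (hr : p < r) :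
    Tendsto (fun n : ℕ => (SimpleGraph.binomialRandom (Fin n) p).real
      {G | r / 2 * n ^ 2 < G.edgeSet.ncard}) atTop (𝓝 0) := by
  have hgap : 0 < r - p := sub_pos.2 hr
  have hr0 : 0 ≤ r := p.2.1.trans hr.le
  refine squeeze_zero (fun _ => measureReal_nonneg) (fun n => ?_)
    (tendsto_exp_neg_mul_choose_two (c := 2 * (r - p) ^ 2) (by positivity))
  have hbound := measureReal_le_ncard_edgeSet_le_exp (V := Fin n) (p := p) hgap.le
  rw [Fintype.card_fin, neg_mul] at hbound
  refine (measureReal_mono fun G hG => ?_).trans hbound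
  rw [Set.mem_ofPred_eq] at hG ⊢
  calc ((p : ℝ) + (r - p)) * n.choose 2 = r / 2 * (n * (n - 1)) := by
        rw [Nat.cast_choose_two]
        ring
    _ ≤ r / 2 * n ^ 2 := by
        gcongr
        nlinarith [(Nat.cast_nonneg n : (0 : ℝ) ≤ n)]
    _ ≤ G.edgeSet.ncard := hG.le

theorem tendsto_measureReal_not_isLowerDense {p : I} (hp : 0 < p) {ε : ℝ} (hε : 0 < ε) :
    Tendsto (fun n : ℕ => (SimpleGraph.binomialRandom (Fin n) p).real
      {G | ¬ IsLowerDense G ε (p / 8)}) atTop (𝓝 0) := by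
  have hp' : (0 : ℝ) < p := hp
  refine squeeze_zero' (.of_forall fun _ => measureReal_nonneg) ?_
    (tendsto_pow_mul_exp_neg_mul_sq (a := 4) (c := p ^ 2 * ε ^ 2 / 8) (by norm_num)
      (by positivity))
  have hlarge : ∀ᶠ n : ℕ in atTop, 2 ≤ ε * n :=
    (tendsto_natCast_atTop_atTop.const_mul_atTop hε).eventually_ge_atTop 2
  filter_upwards [hlarge] with n hn
  simpa using measureReal_not_isLowerDense_le (V := Fin n) (p := p) (by simpa using hn)

theorem tendsto_measureReal_exists_seymourVertex_of_pos {p : I} (hp0 : 0 < p)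
    (hp : (p : ℝ) < 1 / 2) :
    Tendsto (fun n : ℕ => (SimpleGraph.binomialRandom (Fin n) p).real
      {G | ∀ D : Fin n → Fin n → Prop, Orients D G → ∃ v, SeymourVertex D v}) atTop (𝓝 1) := by
  have hp0' : (0 : ℝ) < p := hp0
  obtain ⟨r, hpr, hr⟩ := exists_between hp
  obtain ⟨ε, hε, hseymour⟩ :=
    exists_pos_forall_isLowerDense_exists_seymourVertex (d := p / 8) (by positivity) hr
  refine tendsto_measureReal_one_of_compl_subset_union ?_
    (tendsto_measureReal_not_isLowerDense hp0 hε) (tendsto_measureReal_lt_ncard_edgeSet hpr)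
  filter_upwards [eventually_gt_atTop 0] with n hn G hG
  have : Nonempty (Fin n) := ⟨⟨0, hn⟩⟩
  by_contra hgood
  simp only [Set.mem_union, Set.mem_ofPred_eq, not_or, not_not, not_lt] at hgood
  exact hG fun D hD => hseymour hgood.1 (by simpa using hgood.2) hD

theorem tendsto_measureReal_exists_seymourVertex_zero :
    Tendsto (fun n : ℕ => (SimpleGraph.binomialRandom (Fin n) 0).real
      {G | ∀ D : Fin n → Fin n → Prop, Orients D G → ∃ v, SeymourVertex D v}) atTop (𝓝 1) := by
  refine tendsto_const_nhds.congr' ?_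
  filter_upwards [eventually_gt_atTop 0] with n hn
  have hmem : (⊥ : SimpleGraph (Fin n)) ∈
      {G | ∀ D : Fin n → Fin n → Prop, Orients D G → ∃ v, SeymourVertex D v} :=
    fun D hD => ⟨⟨0, hn⟩, hD.seymourVertex_of_bot _⟩
  rw [SimpleGraph.binomialRandom_zero, measureReal_def, Measure.dirac_apply_of_mem hmem,
    ENNReal.toReal_one]

/-- for fixed `p ∈ [0, 1/2)`, a.a.s. every orientation of `G(n,p)`
contains a Seymour vertex. -/
theorem stmt_0 (p : ℝ) (hp0 : 0 ≤ p) (hp1 : p < 1/2) :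
    Tendsto (fun n => gnpProb n p (fun G =>
        ∀ D : Fin n → Fin n → Prop, Orients D G → ∃ v, SeymourVertex D v))
      atTop (nhds 1) := by
  lift p to I using ⟨hp0, by linarith⟩
  simp only [gnpProb_eq_measureReal_binomialRandom]
  rcases eq_or_lt_of_le (show 0 ≤ p from hp0) with rfl | hpos
  · exact tendsto_measureReal_exists_seymourVertex_zero
  · exact tendsto_measureReal_exists_seymourVertex_of_pos hpos hp1
end

section
/- Let p ∈ (1/2, 1) be a fixed constant. If there exists an oriented graph with no Seymour vertex, then asymptotically almost surely the binomial random graph G(n,p) admits an orientation with no Seymour vertex. -/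
open Filter

/-!
Fix an oriented graph `D` on `m` vertices without Seymour vertices, let `H` be its underlying graph,
and write `G` for `G(n, p)`. The vertex set contains `n / m` disjoint blocks of size `m`, each of
which independently induces a copy of `H` with the same positive probability, so a.a.s. some block
does; orient it as `D`. Since `p > 1 / 2`, a.a.s. more than half of the pairs across every cut
`(S, Sᶜ)` are edges, so some vertex `v` outside `S` is adjacent to more than half of `S`. If `S`
carries an orientation without Seymour vertices, orient all edges between `v` and `S` away from
`v`: nothing changes for the vertices of `S`, while the second outneighbourhood of `v` is contained
in the minority of `S` not adjacent to `v`. So the orientation of the copy of `H` grows, one vertex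
at a time, to an orientation of `G`.

For the cuts, a set of `N` pairs contains at most `N / 2` edges with probability at most
`ρ ^ N`, where `ρ = 2 * √(p * (1 - p)) < 1`, and the sum of `ρ ^ (|S| * |Sᶜ|)` over all
nontrivial cuts tends to `0`.
-/

/-! ### Orientations without Seymour vertices -/

section Deterministic

variable {V W : Type*}

lemma OrientedGraph.orients_fromRel {D : V → V → Prop} (hD : OrientedGraph D) :
    Orients D (SimpleGraph.fromRel D) := by
  refine ⟨hD, fun u v => ?_⟩
  rw [SimpleGraph.fromRel_adj, and_iff_right_of_imp]
  rintro (huv | hvu) rfl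
  · exact hD u u huv huv
  · exact hD u u hvu hvu

/-- The digraph `D` with an arc added from `v` to every vertex of `A`. -/
def addOutArcs (D : V → V → Prop) (v : V) (A : Set V) : V → V → Prop :=
  fun u w => D u w ∨ (u = v ∧ w ∈ A)

lemma addOutArcs_iff_of_ne {D : V → V → Prop} {u v : V} {A : Set V} (huv : u ≠ v) (w : V) :
    addOutArcs D v A u w ↔ D u w := by
  simp [addOutArcs, huv]

lemma addOutArcs_self_iff {D : V → V → Prop} {v : V} {A : Set V} (hv : ∀ w, ¬ D v w) (w : V) :
    addOutArcs D v A v w ↔ w ∈ A := by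
  simp [addOutArcs, hv]

lemma seymourVertex_congr {D D' : V → V → Prop} {u : V} (hu : ∀ w, D u w ↔ D' u w)
    (hout : ∀ x, D u x → ∀ w, D x w ↔ D' x w) : SeymourVertex D u ↔ SeymourVertex D' u := by
  have hN1 : outNbr D u = outNbr D' u := Set.ext fun w => and_congr_right fun _ => hu w
  have hN2 : outNbr2 D u = outNbr2 D' u := by
    rw [outNbr2, outNbr2, ← hN1]
    exact Set.ext fun w => and_congr_right fun _ =>
      exists_congr fun x => and_congr_right fun hx => hout x hx.2 w
  rw [SeymourVertex, SeymourVertex, hN1, hN2]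

lemma outNbr_map {D : W → W → Prop} {f : W → V} (hf : f.Injective) (i : W) :
    outNbr (Relation.Map D f f) (f i) = f '' outNbr D i := by
  ext w
  constructor
  · rintro ⟨hw, a, j, haj, ha, rfl⟩
    obtain rfl := hf ha
    exact ⟨j, ⟨ne_of_apply_ne f hw, haj⟩, rfl⟩
  · rintro ⟨j, ⟨hj, hij⟩, rfl⟩
    exact ⟨hf.ne hj, i, j, hij, rfl, rfl⟩

lemma outNbr2_map {D : W → W → Prop} {f : W → V} (hf : f.Injective) (i : W) :
    outNbr2 (Relation.Map D f f) (f i) = f '' outNbr2 D i := by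
  rw [outNbr2, outNbr_map hf, ← Set.image_insert_eq]
  ext w
  constructor
  · rintro ⟨hw, _, ⟨j, hj, rfl⟩, a, k, hak, ha, rfl⟩
    obtain rfl := hf ha
    exact ⟨k, ⟨fun hk => hw (Set.mem_image_of_mem f hk), a, hj, hak⟩, rfl⟩
  · rintro ⟨k, ⟨hk, j, hj, hjk⟩, rfl⟩
    exact ⟨fun h => hk ((hf.mem_set_image).1 h), f j, Set.mem_image_of_mem f hj,
      j, k, hjk, rfl, rfl⟩

lemma seymourVertex_map_iff {D : W → W → Prop} {f : W → V} (hf : f.Injective) (i : W) :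
    SeymourVertex (Relation.Map D f f) (f i) ↔ SeymourVertex D i := by
  rw [SeymourVertex, SeymourVertex, outNbr_map hf, outNbr2_map hf,
    Set.ncard_image_of_injective _ hf, Set.ncard_image_of_injective _ hf]

/-- `D` is an orientation of the induced subgraph `G[S]` in which no vertex of `S` is a Seymour
vertex. It is encoded as a digraph on all of `V` whose arcs lie inside `S`; the vertices outside
`S` then have no outneighbours, so the Seymour condition is only asked on `S`. -/
def IsSeymourFreeOn (D : V → V → Prop) (G : SimpleGraph V) (S : Set V) : Prop :=
  Orients D (G.induce S).spanningCoe ∧ ∀ v ∈ S, ¬ SeymourVertex D v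

/-- `v` is joined in `G` to more than half of the vertices of `S`. -/
def IsMajorityVertex (G : SimpleGraph V) (S : Set V) (v : V) : Prop :=
  S.ncard < 2 * (S ∩ G.neighborSet v).ncard

/-- Every nonempty proper vertex subset of `G` has a majority vertex outside it. -/
def HasMajorityVertices (G : SimpleGraph V) : Prop :=
  ∀ S : Set V, S.Nonempty → Sᶜ.Nonempty → ∃ v ∉ S, IsMajorityVertex G S v

lemma spanningCoe_induce_adj {G : SimpleGraph V} {S : Set V} {u w : V} :
    (G.induce S).spanningCoe.Adj u w ↔ G.Adj u w ∧ u ∈ S ∧ w ∈ S := by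
  simp

namespace IsSeymourFreeOn

variable {D : V → V → Prop} {G : SimpleGraph V} {S : Set V}

lemma mem_of_arc (h : IsSeymourFreeOn D G S) {u w : V} (huw : D u w) : u ∈ S ∧ w ∈ S :=
  (spanningCoe_induce_adj.1 ((h.1.2 u w).2 (Or.inl huw))).2

/-- Since all outneighbours of `v` have their arcs inside `S`, the second outneighbourhood of `v`
consists of vertices of `S` not adjacent to `v`: this is a minority of `S`. -/
lemma not_seymourVertex_addOutArcs (h : IsSeymourFreeOn D G S) (hS : S.Finite) {v : V} (hv : v ∉ S)
    (hmaj : IsMajorityVertex G S v) :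
    ¬ SeymourVertex (addOutArcs D v (S ∩ G.neighborSet v)) v := by
  have hself := addOutArcs_self_iff (A := S ∩ G.neighborSet v) fun w hw => hv (h.mem_of_arc hw).1
  have hN1 : outNbr (addOutArcs D v (S ∩ G.neighborSet v)) v = S ∩ G.neighborSet v := by
    ext w
    exact (and_congr_right fun _ => hself w).trans
      (and_iff_right_of_imp fun hw => ne_of_mem_of_not_mem hw.1 hv)
  have hN2 : outNbr2 (addOutArcs D v (S ∩ G.neighborSet v)) v ⊆ S \ G.neighborSet v := by
    rw [outNbr2, hN1]
    rintro w ⟨hw, x, hx, hxw⟩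
    have hxw := (addOutArcs_iff_of_ne (ne_of_mem_of_not_mem hx.1 hv) w).1 hxw
    have hwS := (h.mem_of_arc hxw).2
    exact ⟨hwS, fun hadj => hw (Or.inr ⟨hwS, hadj⟩)⟩
  have hle := Set.ncard_le_ncard hN2 hS.sdiff
  have hsplit := Set.ncard_inter_add_ncard_sdiff_eq_ncard S (G.neighborSet v) hS
  rw [SeymourVertex, hN1]
  unfold IsMajorityVertex at hmaj
  lia

lemma extend (h : IsSeymourFreeOn D G S) (hS : S.Finite) {v : V} (hv : v ∉ S)
    (hmaj : IsMajorityVertex G S v) :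
    IsSeymourFreeOn (addOutArcs D v (S ∩ G.neighborSet v)) G (insert v S) := by
  refine ⟨⟨?_, fun u w => ?_⟩, ?_⟩
  · rintro u w (huw | ⟨rfl, hw⟩) (hwu | ⟨rfl, -⟩)
    · exact h.1.1 u w huw hwu
    · exact hv (h.mem_of_arc huw).2
    · exact hv (h.mem_of_arc hwu).2
    · exact hv hw.1
  · have hD := h.1.2 u w
    have hsymm := G.adj_comm u w
    have hirrefl := G.irrefl (v := v)
    simp only [spanningCoe_induce_adj] at hD ⊢
    simp only [addOutArcs, Set.mem_insert_iff, Set.mem_inter_iff,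
      SimpleGraph.mem_neighborSet]
    grind
  · rintro u (rfl | hu)
    · exact h.not_seymourVertex_addOutArcs hS hv hmaj
    · have hout : ∀ x ∈ S, ∀ w, addOutArcs D v (S ∩ G.neighborSet v) x w ↔ D x w :=
        fun x hx => addOutArcs_iff_of_ne (ne_of_mem_of_not_mem hx hv)
      rw [seymourVertex_congr (hout u hu)
        fun x hx => hout x (h.mem_of_arc ((hout u hu x).1 hx)).2]
      exact h.2 u hu

lemma map {D : W → W → Prop} {H : SimpleGraph W} (f : H ↪g G) (hD : Orients D H)
    (hns : ∀ i, ¬ SeymourVertex D i) :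
    IsSeymourFreeOn (Relation.Map D f f) G (Set.range f) := by
  have hmap : ∀ {i j}, Relation.Map D f f (f i) (f j) ↔ D i j := by
    simp [Relation.map_apply, f.injective.eq_iff]
  refine ⟨⟨?_, fun u w => spanningCoe_induce_adj.trans ⟨?_, ?_⟩⟩, ?_⟩
  · rintro _ _ ⟨i, j, hij, rfl, rfl⟩ hji
    exact hD.1 i j hij (hmap.1 hji)
  · rintro ⟨hadj, ⟨i, rfl⟩, ⟨j, rfl⟩⟩
    rw [hmap, hmap]
    exact (hD.2 i j).1 (f.map_adj_iff.1 hadj)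
  · rintro (⟨i, j, hij, rfl, rfl⟩ | ⟨j, i, hij, rfl, rfl⟩)
    · exact ⟨f.map_adj_iff.2 ((hD.2 i j).2 (Or.inl hij)), ⟨i, rfl⟩, ⟨j, rfl⟩⟩
    · exact ⟨f.map_adj_iff.2 ((hD.2 i j).2 (Or.inr hij)), ⟨i, rfl⟩, ⟨j, rfl⟩⟩
  · rintro _ ⟨i, rfl⟩
    rw [seymourVertex_map_iff f.injective]
    exact hns i

/-- A maximal vertex set carrying an orientation without Seymour vertices must be everything. -/
lemma exists_orients [Finite V] (h : IsSeymourFreeOn D G S) (hS : S.Nonempty)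
    (hG : HasMajorityVertices G) :
    ∃ D' : V → V → Prop, Orients D' G ∧ ∀ v, ¬ SeymourVertex D' v := by
  obtain ⟨T, hST, ⟨D', hD'⟩, hTmax⟩ :=
    (Set.toFinite {T : Set V | ∃ D', IsSeymourFreeOn D' G T}).exists_le_maximal ⟨D, h⟩
  obtain rfl : T = Set.univ := by
    by_contra hT
    obtain ⟨v, hv, hmaj⟩ := hG T (hS.mono hST) (Set.nonempty_compl.2 hT)
    exact hv (hTmax ⟨_, hD'.extend T.toFinite hv hmaj⟩ (Set.subset_insert v T)
      (Set.mem_insert v T))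
  exact ⟨D', by simpa using hD'.1, fun v => hD'.2 v trivial⟩

end IsSeymourFreeOn

end Deterministic

/-! ### Random subsets -/

section SetBernoulli

open MeasureTheory ProbabilityTheory unitInterval

lemma measureReal_iInter_compl_of_iIndepSet {Ω κ : Type*} [Fintype κ] {_ : MeasurableSpace Ω}
    {μ : Measure Ω} {s : κ → Set Ω} (hs : ∀ k, MeasurableSet (s k)) (h : iIndepSet s μ) :
    μ.real (⋂ k, (s k)ᶜ) = ∏ k, (1 - μ.real (s k)) := by
  have := h.isProbabilityMeasure
  have hcompl : μ (⋂ k, (s k)ᶜ) = ∏ k, μ (s k)ᶜ :=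
    ((iIndepSet_iff_iIndep s μ).1 h).meas_iInter fun k =>
      (MeasurableSpace.measurableSet_generateFrom (Set.mem_singleton (s k))).compl
  simp only [measureReal_def, hcompl, ENNReal.toReal_prod]
  exact Finset.prod_congr rfl fun k _ => probReal_compl_eq_one_sub (hs k)

variable {ι κ : Type*} {u F : Set ι}

lemma measurable_inter_right (F : Set ι) : Measurable fun T : Set ι => T ∩ F :=
  measurable_set_iff.2 fun i => (measurable_set_mem i).and measurable_const

lemma map_inter_setBernoulli (u F : Set ι) (p : I) :
    (setBernoulli u p).map (· ∩ F) = setBernoulli (u ∩ F) p := by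
  let toSet : (ι → Prop) → Set ι := fun P => {i | P i}
  have htoSet : Measurable toSet := by fun_prop
  have hcomp : (· ∩ F) ∘ toSet = toSet ∘ fun P i => P i ∧ i ∈ F := rfl
  rw [setBernoulli_eq_map, setBernoulli_eq_map, Measure.map_map (measurable_inter_right F) htoSet,
    hcomp, ← Measure.map_map htoSet (by fun_prop),
    Measure.infinitePi_map_pi (f := fun i P => P ∧ i ∈ F) _ (by fun_prop)]
  congr! 3 with i
  rw [Measure.map_add _ _ (by fun_prop), Measure.map_smul, Measure.map_smul, Measure.map_dirac,
    Measure.map_dirac, false_and, Set.mem_inter_iff]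

lemma setBernoulli_preimage_inter (hFu : F ⊆ u) (p : I) {𝒜 : Set (Set ι)}
    (h𝒜 : MeasurableSet 𝒜) :
    setBernoulli u p ((· ∩ F) ⁻¹' 𝒜) = setBernoulli F p 𝒜 := by
  rw [← Measure.map_apply (measurable_inter_right F) h𝒜, map_inter_setBernoulli,
    Set.inter_eq_right.2 hFu]

lemma ncard_biUnion_finset_of_pairwise_disjoint {F : κ → Set ι} (hF : ∀ k, (F k).Finite)
    (hdisj : Pairwise (Function.onFun Disjoint F)) (s : Finset κ) :
    (⋃ k ∈ s, F k).ncard = ∑ k ∈ s, (F k).ncard := by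
  rw [← finsum_mem_coe_finset]
  exact s.finite_toSet.ncard_biUnion (fun k _ => hF k) (hdisj.set_pairwise _)

lemma biUnion_inter_eq_of_pairwise_disjoint {F R : κ → Set ι} (hRF : ∀ k, R k ⊆ F k)
    (hdisj : Pairwise (Function.onFun Disjoint F)) {s : Finset κ} {k : κ} (hk : k ∈ s) :
    (⋃ j ∈ s, R j) ∩ F k = R k := by
  ext e
  simp only [Set.mem_inter_iff, Set.mem_iUnion₂]
  refine ⟨?_, fun he => ⟨⟨k, hk, he⟩, hRF k he⟩⟩
  rintro ⟨⟨j, -, hej⟩, hek⟩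
  obtain rfl : j = k := hdisj.eq (Set.not_disjoint_iff.2 ⟨e, hRF j hej, hek⟩)
  exact hej

lemma forall_inter_eq_iff_inter_biUnion_eq {F R : κ → Set ι} (hRF : ∀ k, R k ⊆ F k)
    (hdisj : Pairwise (Function.onFun Disjoint F)) (s : Finset κ) (T : Set ι) :
    (∀ k ∈ s, T ∩ F k = R k) ↔ T ∩ ⋃ k ∈ s, F k = ⋃ k ∈ s, R k := by
  constructor
  · intro h
    rw [Set.inter_iUnion₂]
    exact Set.iUnion₂_congr h
  · intro h k hk
    rw [← biUnion_inter_eq_of_pairwise_disjoint hRF hdisj hk, ← h, Set.inter_assoc,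
      Set.inter_eq_right.2 (Set.subset_iUnion₂ (s := fun k (_ : k ∈ s) => F k) k hk)]

variable [Countable ι]

/-- The intersection of finitely many of these events is again an event of the same kind, for the
unions of the `F k` and of the `R k`, so that every probability involved is explicit. -/
lemma iIndepSet_setBernoulli_inter_eq {F R : κ → Set ι} (hF : ∀ k, (F k).Finite)
    (hFu : ∀ k, F k ⊆ u) (hRF : ∀ k, R k ⊆ F k) (hdisj : Pairwise (Function.onFun Disjoint F))
    (p : I) : iIndepSet (fun k => (· ∩ F k) ⁻¹' {R k}) (setBernoulli u p) := by
  rw [iIndepSet_iff_meas_biInter fun k => measurable_inter_right _ (measurableSet_singleton _)]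
  intro s
  have hinter : ⋂ k ∈ s, (· ∩ F k) ⁻¹' {R k} = (· ∩ ⋃ k ∈ s, F k) ⁻¹' {⋃ k ∈ s, R k} := by
    ext T
    simpa using forall_inter_eq_iff_inter_biUnion_eq hRF hdisj s T
  have hsdiff : (⋃ k ∈ s, F k) \ ⋃ k ∈ s, R k = ⋃ k ∈ s, F k \ R k := by
    simp_rw [Set.iUnion_sdiff]
    refine Set.iUnion₂_congr fun k hk => ?_
    rw [← Set.sdiff_inter_self_eq_sdiff,
      biUnion_inter_eq_of_pairwise_disjoint hRF hdisj hk]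
  have hFs : (⋃ k ∈ s, F k).Finite := s.finite_toSet.biUnion fun k _ => hF k
  rw [hinter, setBernoulli_preimage_inter (Set.iUnion₂_subset fun k _ => hFu k) p
    (measurableSet_singleton _), setBernoulli_singleton p (Set.iUnion₂_mono fun k _ => hRF k) hFs,
    hsdiff,
    ncard_biUnion_finset_of_pairwise_disjoint (fun k => (hF k).subset (hRF k))
      (fun i j hij => (hdisj hij).mono (hRF i) (hRF j)),
    ncard_biUnion_finset_of_pairwise_disjoint (fun k => (hF k).sdiff)
      (fun i j hij => (hdisj hij).mono Set.sdiff_subset Set.sdiff_subset),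
    ← Finset.prod_pow_eq_pow_sum, ← Finset.prod_pow_eq_pow_sum, ← Finset.prod_mul_distrib]
  refine Finset.prod_congr rfl fun k _ => ?_
  rw [setBernoulli_preimage_inter (hFu k) p (measurableSet_singleton _),
    setBernoulli_singleton p (hRF k) (hF k)]

lemma setBernoulli_real_forall_inter_ne [Fintype κ] {F R : κ → Set ι} (hF : ∀ k, (F k).Finite)
    (hFu : ∀ k, F k ⊆ u) (hRF : ∀ k, R k ⊆ F k) (hdisj : Pairwise (Function.onFun Disjoint F))
    (p : I) :
    (setBernoulli u p).real {T | ∀ k, T ∩ F k ≠ R k} =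
      ∏ k, (1 - (setBernoulli (F k) p).real {R k}) := by
  have hset : {T : Set ι | ∀ k, T ∩ F k ≠ R k} = ⋂ k, ((· ∩ F k) ⁻¹' {R k})ᶜ := by
    ext T
    simp
  rw [hset, measureReal_iInter_compl_of_iIndepSet
    (fun k => measurable_inter_right _ (measurableSet_singleton _))
    (iIndepSet_setBernoulli_inter_eq hF hFu hRF hdisj p)]
  simp_rw [measureReal_def, setBernoulli_preimage_inter (hFu _) p (measurableSet_singleton _)]

lemma pow_mul_one_sub_pow_le {p : ℝ} (hp : 1 / 2 ≤ p) (hp1 : p ≤ 1) {r N : ℕ} (h : 2 * r ≤ N) :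
    p ^ r * (1 - p) ^ (N - r) ≤ √(p * (1 - p)) ^ N := by
  obtain ⟨d, rfl⟩ := Nat.exists_eq_add_of_le h
  have hq : 0 ≤ 1 - p := by linarith
  have hle : (1 - p) ^ d ≤ √(p * (1 - p)) ^ d :=
    pow_le_pow_left₀ hq (Real.le_sqrt_of_sq_le (by nlinarith)) d
  calc p ^ r * (1 - p) ^ (2 * r + d - r)
      = (p * (1 - p)) ^ r * (1 - p) ^ d := by
        rw [show 2 * r + d - r = r + d by lia, pow_add, mul_pow, mul_assoc]
    _ ≤ (p * (1 - p)) ^ r * √(p * (1 - p)) ^ d := by gcongr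
    _ = √(p * (1 - p)) ^ (2 * r + d) := by
        rw [pow_add, pow_mul, Real.sq_sqrt (by positivity)]

/-- Each of the at most `2 ^ |F|` outcomes has probability at most `√(p * (1 - p)) ^ |F|`. -/
lemma setBernoulli_real_two_mul_ncard_le (hF : F.Finite) {p : I} (hp : (1 / 2 : ℝ) ≤ p) :
    (setBernoulli F p).real {T | 2 * T.ncard ≤ F.ncard} ≤ (2 * √(p * (1 - p))) ^ F.ncard := by
  have hfin : {T | T ⊆ F ∧ 2 * T.ncard ≤ F.ncard}.Finite :=
    hF.finite_subsets.subset fun T hT => hT.1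
  have hcard : hfin.toFinset.card ≤ 2 ^ F.ncard := by
    rw [← Set.ncard_powerset F hF, ← Set.ncard_eq_toFinset_card _ hfin]
    exact Set.ncard_le_ncard (fun T hT => hT.1) hF.finite_subsets
  have hweight : ∀ T ∈ hfin.toFinset,
      (setBernoulli F p).real {T} ≤ √(p * (1 - p)) ^ F.ncard := by
    intro T hT
    obtain ⟨hTF, hT⟩ := hfin.mem_toFinset.1 hT
    rw [setBernoulli_real_singleton p hTF hF, Set.ncard_sdiff' hTF hF]
    exact pow_mul_one_sub_pow_le hp p.2.2 hT
  have hset : {T ∈ {T : Set ι | 2 * T.ncard ≤ F.ncard} | T ⊆ F} = ⋃ T ∈ hfin.toFinset, {T} := by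
    ext T
    simp [and_comm]
  calc (setBernoulli F p).real {T | 2 * T.ncard ≤ F.ncard}
      = (setBernoulli F p).real (⋃ T ∈ hfin.toFinset, {T}) := by
        rw [measureReal_def, setBernoulli_apply_eq_apply_subsets, hset, ← measureReal_def]
    _ ≤ ∑ T ∈ hfin.toFinset, (setBernoulli F p).real {T} := measureReal_biUnion_finset_le _ _
    _ ≤ hfin.toFinset.card • √(p * (1 - p)) ^ F.ncard := Finset.sum_le_card_nsmul _ _ _ hweight
    _ ≤ (2 * √(p * (1 - p))) ^ F.ncard := by
        rw [nsmul_eq_mul, mul_pow]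
        gcongr
        exact_mod_cast hcard

end SetBernoulli

/-! ### The binomial random graph -/

section BinomialRandomGraph

open MeasureTheory ProbabilityTheory unitInterval SimpleGraph

variable {V W κ : Type*}

instance [Finite V] : DiscreteMeasurableSpace (SimpleGraph V) where
  forall_measurableSet s := by
    rw [← edgeSet_injective.preimage_image s]
    exact measurable_edgeSet (Set.toFinite _).measurableSet

lemma range_edgeSet : Set.range (edgeSet : SimpleGraph V → Set (Sym2 V)) = 𝒫 Sym2.diagSetᶜ := by
  ext T
  refine ⟨?_, fun hT => ⟨fromEdgeSet T, ?_⟩⟩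
  · rintro ⟨G, rfl⟩
    exact G.edgeSet_subset_compl_diagSet
  · rw [edgeSet_fromEdgeSet, sdiff_eq_left]
    exact Set.subset_compl_iff_disjoint_right.1 hT

lemma binomialRandom_preimage_edgeSet [Countable V] (p : I) (𝒜 : Set (Set (Sym2 V))) :
    G(V, p) (edgeSet ⁻¹' 𝒜) = setBernoulli Sym2.diagSetᶜ p 𝒜 := by
  rw [binomialRandom_apply', Set.image_preimage_eq_inter_range, range_edgeSet,
    setBernoulli_apply_eq_apply_subsets _ _ 𝒜]
  rfl

lemma binomialRandom_real_singleton [Finite V] (G : SimpleGraph V) (p : I) :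
    G(V, p).real {G} = (p : ℝ) ^ G.edgeSet.ncard *
      (1 - p) ^ ((Nat.card V).choose 2 - G.edgeSet.ncard) := by
  simp [measureReal_def]

lemma gnpProb_eq_binomialRandom_real (n : ℕ) (p : I) (P : SimpleGraph (Fin n) → Prop) :
    gnpProb n p P = G(Fin n, p).real {G | P G} := by
  classical
  rw [gnpProb, ← Finset.sum_filter, ← Finset.coe_filter_univ, ← sum_measureReal_singleton]
  simp_rw [binomialRandom_real_singleton, Nat.card_fin]

lemma binomialRandom_real_two_mul_ncard_inter_le [Finite V] {F : Set (Sym2 V)}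
    (hF : F ⊆ Sym2.diagSetᶜ) {p : I} (hp : (1 / 2 : ℝ) ≤ p) :
    G(V, p).real {G | 2 * (G.edgeSet ∩ F).ncard ≤ F.ncard} ≤
      (2 * √(p * (1 - p))) ^ F.ncard := by
  have hpre : G(V, p) {G | 2 * (G.edgeSet ∩ F).ncard ≤ F.ncard} =
      setBernoulli F p {T | 2 * T.ncard ≤ F.ncard} := by
    rw [← setBernoulli_preimage_inter hF p (Set.toFinite _).measurableSet]
    exact binomialRandom_preimage_edgeSet p {T | 2 * (T ∩ F).ncard ≤ F.ncard}
  rw [measureReal_def, hpre]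
  exact setBernoulli_real_two_mul_ncard_le F.toFinite hp

lemma edgeSet_inter_image_map_compl_diagSet (G : SimpleGraph V) (f : W → V) :
    G.edgeSet ∩ Sym2.map f '' Sym2.diagSetᶜ = Sym2.map f '' (G.comap f).edgeSet := by
  have hcomap : (G.comap f).edgeSet = Sym2.map f ⁻¹' G.edgeSet := by
    ext ⟨x, y⟩
    rfl
  rw [Set.inter_comm, ← Set.image_inter_preimage, ← hcomap,
    Set.inter_eq_right.2 (edgeSet_subset_compl_diagSet _)]

lemma comap_eq_iff_edgeSet_inter {G : SimpleGraph V} {H : SimpleGraph W} {f : W → V}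
    (hf : f.Injective) :
    G.comap f = H ↔
      G.edgeSet ∩ Sym2.map f '' Sym2.diagSetᶜ = Sym2.map f '' H.edgeSet := by
  rw [edgeSet_inter_image_map_compl_diagSet, (Sym2.map.injective hf).image_injective.eq_iff,
    edgeSet_inj]

lemma setBernoulli_real_singleton_image_map [Countable V] [Finite W] (H : SimpleGraph W) {f : W → V}
    (hf : f.Injective) (p : I) :
    (setBernoulli (Sym2.map f '' Sym2.diagSetᶜ) p).real {Sym2.map f '' H.edgeSet} =
      G(W, p).real {H} := by
  have hmap := Sym2.map.injective hf
  have hH := H.edgeSet_subset_compl_diagSet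
  rw [setBernoulli_real_singleton p (Set.image_mono hH) (Set.toFinite _),
    ← Set.image_sdiff hmap, Set.ncard_image_of_injective _ hmap,
    Set.ncard_image_of_injective _ hmap, Set.ncard_sdiff hH, Sym2.ncard_diagSet_compl,
    binomialRandom_real_singleton]

lemma disjoint_image_sym2Map {f g : W → V} (h : Disjoint (Set.range f) (Set.range g))
    (A B : Set (Sym2 W)) : Disjoint (Sym2.map f '' A) (Sym2.map g '' B) := by
  rw [Set.disjoint_left]
  rintro _ ⟨a, -, rfl⟩ ⟨b, -, hab⟩
  induction a with | _ x y =>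
  have hx : f x ∈ Sym2.map g b := by simp [hab]
  obtain ⟨z, -, hz⟩ := Sym2.mem_map.1 hx
  exact Set.disjoint_left.1 h ⟨x, rfl⟩ ⟨z, hz⟩

lemma binomialRandom_real_forall_comap_ne [Finite V] [Finite W] [Fintype κ] {f : κ → W → V}
    (hf : ∀ k, (f k).Injective)
    (hdisj : Pairwise (Function.onFun Disjoint fun k => Set.range (f k)))
    (H : SimpleGraph W) (p : I) :
    G(V, p).real {G | ∀ k, G.comap (f k) ≠ H} = (1 - G(W, p).real {H}) ^ Fintype.card κ := by
  have hFu : ∀ k, Sym2.map (f k) '' Sym2.diagSetᶜ ⊆ Sym2.diagSetᶜ :=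
    fun k => Set.image_subset_iff.2 fun e he => mt (Sym2.isDiag_map (hf k)).1 he
  have hset : {G : SimpleGraph V | ∀ k, G.comap (f k) ≠ H} = edgeSet ⁻¹'
      {T | ∀ k, T ∩ Sym2.map (f k) '' Sym2.diagSetᶜ ≠ Sym2.map (f k) '' H.edgeSet} :=
    Set.ext fun G => forall_congr' fun k => (comap_eq_iff_edgeSet_inter (hf k)).not
  rw [hset, measureReal_def, binomialRandom_preimage_edgeSet, ← measureReal_def,
    setBernoulli_real_forall_inter_ne (fun k => Set.toFinite _) hFu
      (fun k => Set.image_mono H.edgeSet_subset_compl_diagSet)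
      (fun j k hjk => disjoint_image_sym2Map (hdisj hjk) _ _)]
  simp_rw [setBernoulli_real_singleton_image_map H (hf _) p]
  rw [Finset.prod_const, Finset.card_univ]

lemma binomialRandom_real_singleton_pos [Finite W] (H : SimpleGraph W) {p : I}
    (hp0 : (0 : ℝ) < p) (hp1 : (p : ℝ) < 1) : 0 < G(W, p).real {H} := by
  have : 0 < 1 - (p : ℝ) := by linarith
  rw [binomialRandom_real_singleton]
  positivity

lemma ncard_edgeSet_between_compl [Fintype V] [DecidableEq V] (G : SimpleGraph V) (S : Finset V) :
    (G.between S (↑S)ᶜ).edgeSet.ncard = ∑ v ∈ Sᶜ, (↑S ∩ G.neighborSet v).ncard := by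
  classical
  have hbip : (G.between S (↑S)ᶜ).IsBipartiteWith S (Sᶜ : Finset V) := by
    simpa using between_isBipartiteWith disjoint_compl_right
  rw [← coe_edgeFinset, Set.ncard_coe_finset, ← isBipartiteWith_sum_degrees_eq_card_edges' hbip]
  refine Finset.sum_congr rfl fun v hv => ?_
  rw [← card_neighborFinset_eq_degree, ← Set.ncard_coe_finset, coe_neighborFinset]
  congr 1
  ext w
  grind [between_adj, mem_neighborSet, G.adj_comm, Finset.mem_compl]

lemma ncard_edgeSet_between_compl_top [Fintype V] [DecidableEq V] (S : Finset V) :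
    ((⊤ : SimpleGraph V).between S (↑S)ᶜ).edgeSet.ncard = S.card * Sᶜ.card := by
  rw [ncard_edgeSet_between_compl, mul_comm]
  refine Finset.sum_const_nat fun v hv => ?_
  rw [neighborSet_top, Set.inter_eq_left.2, Set.ncard_coe_finset]
  simpa using hv

lemma exists_isMajorityVertex_of_lt [Fintype V] [DecidableEq V] {G : SimpleGraph V} {S : Finset V}
    (h : S.card * Sᶜ.card < 2 * (G.between S (↑S)ᶜ).edgeSet.ncard) :
    ∃ v ∉ S, IsMajorityVertex G S v := by
  rw [ncard_edgeSet_between_compl, Finset.mul_sum, mul_comm, ← smul_eq_mul,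
    ← Finset.sum_const] at h
  obtain ⟨v, hv, hlt⟩ := Finset.exists_lt_of_sum_lt h
  exact ⟨v, Finset.mem_compl.1 hv, by rwa [IsMajorityVertex, Set.ncard_coe_finset]⟩

lemma binomialRandom_real_two_mul_ncard_between_le [Fintype V] [DecidableEq V] (S : Finset V)
    {p : I} (hp : (1 / 2 : ℝ) ≤ p) :
    G(V, p).real {G | 2 * (G.between S (↑S)ᶜ).edgeSet.ncard ≤ S.card * Sᶜ.card} ≤
      (2 * √(p * (1 - p))) ^ (S.card * Sᶜ.card) := by
  have hbetween : ∀ G : SimpleGraph V, (G.between S (↑S)ᶜ).edgeSet =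
      G.edgeSet ∩ ((⊤ : SimpleGraph V).between S (↑S)ᶜ).edgeSet := by
    intro G
    ext ⟨v, w⟩
    simpa [between_adj] using fun h _ => h.ne
  simpa only [← hbetween, ncard_edgeSet_between_compl_top] using
    binomialRandom_real_two_mul_ncard_inter_le (edgeSet_subset_compl_diagSet 
      ((⊤ : SimpleGraph V).between S (↑S)ᶜ)) hp

lemma sum_nonempty_pow_card [Fintype V] (x : ℝ) :
    ∑ S : Finset V with S.Nonempty, x ^ S.card = (x + 1) ^ Fintype.card V - 1 := by
  classical
  rw [← Fintype.sum_pow_mul_eq_add_pow V x 1]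
  simp_rw [one_pow, mul_one, Finset.nonempty_iff_ne_empty, Finset.filter_ne']
  simp [Finset.sum_erase_eq_sub]

/-- The exponent `2 * (a * b)` of `√ρ` on the left is at least `(a + b) * min a b`. -/
lemma pow_mul_le_sqrt_pow_pow_add {ρ : ℝ} (hρ0 : 0 ≤ ρ) (hρ1 : ρ ≤ 1) (a b : ℕ) :
    ρ ^ (a * b) ≤ (√ρ ^ (a + b)) ^ a + (√ρ ^ (a + b)) ^ b := by
  wlog hab : a ≤ b generalizing a b
  · rw [mul_comm, add_comm, add_comm a]
    exact this b a (by lia)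
  calc ρ ^ (a * b) = √ρ ^ (2 * (a * b)) := by rw [pow_mul √ρ, Real.sq_sqrt hρ0]
    _ ≤ √ρ ^ ((a + b) * a) := pow_le_pow_of_le_one (by positivity) (by simpa) (by nlinarith)
    _ ≤ (√ρ ^ (a + b)) ^ a + (√ρ ^ (a + b)) ^ b := by
        rw [pow_mul]
        exact le_add_of_nonneg_right (by positivity)

lemma sum_pow_card_mul_card_compl_le [Fintype V] [DecidableEq V] {ρ : ℝ} (hρ0 : 0 ≤ ρ)
    (hρ1 : ρ ≤ 1) :
    ∑ S : Finset V with S.Nonempty ∧ Sᶜ.Nonempty, ρ ^ (S.card * Sᶜ.card) ≤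
      2 * ((√ρ ^ Fintype.card V + 1) ^ Fintype.card V - 1) := by
  set x := √ρ ^ Fintype.card V with hx
  have hcompl : ∑ S : Finset V with Sᶜ.Nonempty, x ^ Sᶜ.card =
      ∑ S : Finset V with S.Nonempty, x ^ S.card :=
    Finset.sum_bijective compl compl_bijective (by simp) fun _ _ => rfl
  calc ∑ S : Finset V with S.Nonempty ∧ Sᶜ.Nonempty, ρ ^ (S.card * Sᶜ.card)
      ≤ ∑ S : Finset V with S.Nonempty ∧ Sᶜ.Nonempty, (x ^ S.card + x ^ Sᶜ.card) := by
        refine Finset.sum_le_sum fun S _ => ?_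
        rw [hx, ← S.card_add_card_compl]
        exact pow_mul_le_sqrt_pow_pow_add hρ0 hρ1 _ _
    _ ≤ ∑ S : Finset V with S.Nonempty, x ^ S.card +
          ∑ S : Finset V with Sᶜ.Nonempty, x ^ Sᶜ.card := by
        rw [Finset.sum_add_distrib]
        gcongr <;> grind
    _ = 2 * ((x + 1) ^ Fintype.card V - 1) := by
        rw [hcompl, sum_nonempty_pow_card, two_mul]

lemma binomialRandom_real_not_hasMajorityVertices_le [Fintype V] {p : I}
    (hp : (1 / 2 : ℝ) ≤ p) :
    G(V, p).real {G | ¬ HasMajorityVertices G} ≤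
      2 * ((√(2 * √(p * (1 - p))) ^ Fintype.card V + 1) ^ Fintype.card V - 1) := by
  classical
  have hρ : 2 * √(p * (1 - p) : ℝ) ≤ 1 := by
    have h : √(p * (1 - p) : ℝ) ≤ 1 / 2 := Real.sqrt_le_iff.2 ⟨by norm_num, by nlinarith⟩
    linarith
  have hsub : {G : SimpleGraph V | ¬ HasMajorityVertices G} ⊆
      ⋃ S ∈ ({S | S.Nonempty ∧ Sᶜ.Nonempty} : Finset (Finset V)),
        {G | 2 * (G.between S (↑S)ᶜ).edgeSet.ncard ≤ S.card * Sᶜ.card} := by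
    intro G hG
    obtain ⟨S, hS, hSc, hmaj⟩ : ∃ S : Set V, S.Nonempty ∧ Sᶜ.Nonempty ∧
        ∀ v ∉ S, ¬ IsMajorityVertex G S v := by
      simpa [HasMajorityVertices] using hG
    lift S to Finset V using S.toFinite
    have hcut := not_lt.1 <| mt exists_isMajorityVertex_of_lt (by simpa using hmaj)
    simpa using ⟨S, ⟨hS, by exact_mod_cast hSc⟩, hcut⟩
  calc G(V, p).real {G | ¬ HasMajorityVertices G}
      ≤ ∑ S : Finset V with S.Nonempty ∧ Sᶜ.Nonempty, G(V, p).real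
          {G | 2 * (G.between S (↑S)ᶜ).edgeSet.ncard ≤ S.card * Sᶜ.card} :=
        (measureReal_mono hsub (measure_ne_top _ _)).trans (measureReal_biUnion_finset_le _ _)
    _ ≤ ∑ S : Finset V with S.Nonempty ∧ Sᶜ.Nonempty,
          (2 * √(p * (1 - p) : ℝ)) ^ (S.card * Sᶜ.card) :=
        Finset.sum_le_sum fun S _ => binomialRandom_real_two_mul_ncard_between_le S hp
    _ ≤ _ := sum_pow_card_mul_card_compl_le (by positivity) hρ

lemma tendsto_pow_add_one_pow {x : ℝ} (hx0 : 0 ≤ x) (hx1 : x < 1) :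
    Tendsto (fun n : ℕ => (x ^ n + 1) ^ n) atTop (nhds 1) := by
  simpa [add_comm] using Real.tendsto_one_add_pow_exp_of_tendsto
    (tendsto_self_mul_const_pow_of_lt_one hx0 hx1)

lemma tendsto_binomialRandom_real_not_hasMajorityVertices {p : I} (hp0 : (1 / 2 : ℝ) < p) :
    Tendsto (fun n => G(Fin n, p).real {G | ¬ HasMajorityVertices G}) atTop (nhds 0) := by
  have hρ : √(2 * √(p * (1 - p) : ℝ)) < 1 := by
    have h : √(p * (1 - p) : ℝ) < 1 / 2 := (Real.sqrt_lt' (by norm_num)).2 (by nlinarith)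
    rw [Real.sqrt_lt' one_pos]
    linarith
  refine squeeze_zero (fun n => measureReal_nonneg)
    (fun n => binomialRandom_real_not_hasMajorityVertices_le hp0.le) ?_
  simpa using ((tendsto_pow_add_one_pow (Real.sqrt_nonneg _) hρ).sub_const 1).const_mul 2

/-- The `n / m` disjoint blocks of `m` consecutive vertices are independent trials for `H`. -/
lemma tendsto_binomialRandom_real_not_isIndContained {m : ℕ} (hm : 0 < m) (H : SimpleGraph (Fin m))
    {p : I} (hp0 : (0 : ℝ) < p) (hp1 : (p : ℝ) < 1) :
    Tendsto (fun n => G(Fin n, p).real {G | ¬ H ⊴ G}) atTop (nhds 0) := by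
  have hH := binomialRandom_real_singleton_pos H hp0 hp1
  have hlim : Tendsto (fun n => (1 - G(Fin m, p).real {H}) ^ (n / m)) atTop (nhds 0) :=
    (tendsto_pow_atTop_nhds_zero_of_lt_one (sub_nonneg.2 measureReal_le_one) (by linarith)).comp
      (Nat.tendsto_div_const_atTop hm.ne')
  refine squeeze_zero (fun n => measureReal_nonneg) (fun n => ?_) hlim
  let f : Fin (n / m) × Fin m ↪ Fin n :=
    finProdFinEquiv.toEmbedding.trans (Fin.castLEEmb (Nat.div_mul_le_self n m))
  have hf : ∀ k, Function.Injective fun i => f (k, i) := fun k i j hij => by simpa using hij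
  have hdisj : Pairwise (Function.onFun Disjoint fun k => Set.range fun i => f (k, i)) := by
    intro j k hjk
    refine Set.disjoint_range_iff.2 fun x y => f.injective.ne ?_
    simp [hjk]
  have hcopy : ∀ G k, G.comap (fun i => f (k, i)) = H → H ⊴ G := by
    rintro G k rfl
    exact ⟨SimpleGraph.Embedding.comap ⟨_, hf k⟩ G⟩
  calc G(Fin n, p).real {G | ¬ H ⊴ G}
      ≤ G(Fin n, p).real {G | ∀ k, G.comap (fun i => f (k, i)) ≠ H} :=
        measureReal_mono fun G hG k => mt (hcopy G k) hG
    _ = (1 - G(Fin m, p).real {H}) ^ (n / m) := by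
        rw [binomialRandom_real_forall_comap_ne hf hdisj, Fintype.card_fin]

lemma tendsto_gnpProb_of_and_imp {p : I} {P Q R : ∀ n, SimpleGraph (Fin n) → Prop}
    (himp : ∀ n G, Q n G → R n G → P n G)
    (hQ : Tendsto (fun n => G(Fin n, p).real {G | ¬ Q n G}) atTop (nhds 0))
    (hR : Tendsto (fun n => G(Fin n, p).real {G | ¬ R n G}) atTop (nhds 0)) :
    Tendsto (fun n => gnpProb n p (P n)) atTop (nhds 1) := by
  simp_rw [gnpProb_eq_binomialRandom_real]
  have hlower := tendsto_const_nhds (x := (1 : ℝ)).sub (hQ.add hR)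
  rw [add_zero, sub_zero] at hlower
  refine tendsto_of_tendsto_of_tendsto_of_le_of_le hlower tendsto_const_nhds (fun n => ?_)
    fun n => measureReal_le_one
  have hsub : {G | P n G}ᶜ ⊆ {G | ¬ Q n G} ∪ {G | ¬ R n G} := by
    intro G hP
    exact not_and_or.1 fun h => hP (himp n G h.1 h.2)
  calc 1 - (G(Fin n, p).real {G | ¬ Q n G} + G(Fin n, p).real {G | ¬ R n G})
      ≤ 1 - G(Fin n, p).real {G | P n G}ᶜ := by
        gcongr
        exact (measureReal_mono hsub).trans (measureReal_union_le _ _)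
    _ = G(Fin n, p).real {G | P n G} := by
        rw [probReal_compl_eq_one_sub (Set.toFinite _).measurableSet, sub_sub_cancel]

end BinomialRandomGraph

/-- for fixed `p ∈ (1/2, 1)`, if some (nonempty) oriented graph has no
Seymour vertex, then a.a.s. `G(n,p)` admits an orientation with no Seymour vertex. -/
theorem stmt_1 (p : ℝ) (hp0 : 1/2 < p) (hp1 : p < 1)
    (hcounter : ∃ (m : ℕ) (D : Fin m → Fin m → Prop),
      0 < m ∧ OrientedGraph D ∧ ∀ v, ¬ SeymourVertex D v) :
    Tendsto (fun n => gnpProb n p (fun G =>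
        ∃ D : Fin n → Fin n → Prop, Orients D G ∧ ∀ v, ¬ SeymourVertex D v))
      atTop (nhds 1) := by
  obtain ⟨m, D, hm, hD, hns⟩ := hcounter
  lift p to unitInterval using ⟨by linarith, hp1.le⟩
  refine tendsto_gnpProb_of_and_imp (fun n G hmaj hcopy => ?_)
    (tendsto_binomialRandom_real_not_hasMajorityVertices hp0)
    (tendsto_binomialRandom_real_not_isIndContained hm (SimpleGraph.fromRel D)
      (by linarith) hp1)
  obtain ⟨f⟩ := hcopy
  have : Nonempty (Fin m) := ⟨⟨0, hm⟩⟩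
  exact (IsSeymourFreeOn.map f hD.orients_fromRel hns).exists_orients (Set.range_nonempty f) hmaj
end

section
/- Let D be an oriented graph on n vertices that contains no Seymour vertex, and suppose that every oriented graph on fewer than n vertices contains a Seymour vertex (i.e., D is a vertex-minimal counterexample to Seymour's conjecture). Then the minimum outdegree of D satisfies δ⁺(D) > √n. -/
open Filter

/-!
Grow a vertex set `S` from a single vertex `v` of outdegree `d`. As long as `S` is not everything,
minimality provides a Seymour vertex `u` of the subgraph induced on `S`; since `u` is not a Seymour
vertex of `D`, it has more outneighbours than second outneighbours outside `S`. Adding the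
outneighbours of `u` to `S` therefore shrinks the boundary of `S`, whose size was `d` at the start,
and adds at most as many vertices as the old boundary had. Hence `n ≤ 1 + d + (d - 1) + ⋯ + 1`,
which is less than `d ^ 2` once `3 ≤ d`. Smaller outdegrees are excluded because some vertex of an
oriented graph has at least as many inneighbours as outneighbours, so that `2 * δ⁺(D) < n`.
-/

/-- The out-boundary of a vertex set `S`: the vertices outside `S` that receive an arc from `S`.
Its size is the quantity that decreases as `S` grows. -/
def outBdry {V : Type*} (D : V → V → Prop) (S : Set V) : Set V := {w | w ∉ S ∧ ∃ u ∈ S, D u w}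

/-- `D` is a counterexample to Seymour's conjecture that is minimal under taking induced
subdigraphs: `D` has no Seymour vertex, but each of its nonempty proper induced subdigraphs has
one. -/
structure SeymourCritical {V : Type*} (D : V → V → Prop) : Prop where
  not_seymourVertex : ∀ v, ¬ SeymourVertex D v
  exists_seymourVertex : ∀ S : Set V, S.Nonempty → S ≠ Set.univ →
    ∃ u, SeymourVertex (Subrel D (· ∈ S)) u

section Preimage

variable {V W : Type*} {D : V → V → Prop}

theorem outNbr_preimage {f : W → V} (hf : Function.Injective f) (w : W) :
    outNbr (f ⁻¹'o D) w = f ⁻¹' outNbr D (f w) := by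
  ext x
  simp [outNbr, hf.ne_iff]

theorem outNbr2_preimage_subset {f : W → V} (hf : Function.Injective f) (w : W) :
    outNbr2 (f ⁻¹'o D) w ⊆ f ⁻¹' outNbr2 D (f w) := by
  rintro x ⟨hx, u, hu, hux⟩
  rw [outNbr_preimage hf] at hx hu
  exact ⟨by simpa [hf.eq_iff] using hx, f u, hu, hux⟩

theorem outNbr2_preimage_equiv (e : W ≃ V) (w : W) :
    outNbr2 (e ⁻¹'o D) w = e ⁻¹' outNbr2 D (e w) := by
  refine (outNbr2_preimage_subset e.injective w).antisymm ?_
  rintro x ⟨hx, u, hu, hux⟩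
  obtain ⟨u, rfl⟩ := e.surjective u
  refine ⟨?_, u, ?_, hux⟩ <;> rw [outNbr_preimage e.injective]
  · simpa using hx
  · exact hu

theorem seymourVertex_preimage_equiv (e : W ≃ V) (w : W) :
    SeymourVertex (e ⁻¹'o D) w ↔ SeymourVertex D (e w) := by
  simp only [SeymourVertex, outNbr_preimage e.injective, outNbr2_preimage_equiv,
    Set.ncard_preimage_of_injective_subset_range e.injective, e.surjective.range_eq,
    Set.subset_univ]

theorem OrientedGraph.preimage (hD : OrientedGraph D) (f : W → V) : OrientedGraph (f ⁻¹'o D) :=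
  fun u v => hD (f u) (f v)

theorem OrientedGraph.exists_seymourVertex_of_forall_fin [Finite V] (hD : OrientedGraph D)
    (hfin : ∀ D' : Fin (Nat.card V) → Fin (Nat.card V) → Prop,
      OrientedGraph D' → ∃ v, SeymourVertex D' v) :
    ∃ v, SeymourVertex D v := by
  let e := (Finite.equivFin V).symm
  obtain ⟨i, hi⟩ := hfin _ (hD.preimage e)
  exact ⟨e i, (seymourVertex_preimage_equiv e i).mp hi⟩

theorem OrientedGraph.seymourCritical [Finite V] (hD : OrientedGraph D)
    (hno : ∀ v, ¬ SeymourVertex D v)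
    (hmin : ∀ m : ℕ, 0 < m → m < Nat.card V → ∀ D' : Fin m → Fin m → Prop,
      OrientedGraph D' → ∃ v, SeymourVertex D' v) :
    SeymourCritical D where
  not_seymourVertex := hno
  exists_seymourVertex S hS hne :=
    (hD.preimage Subtype.val).exists_seymourVertex_of_forall_fin <|
      hmin _ hS.ncard_pos (Set.ncard_lt_card hne)

end Preimage

section Growth

variable {V : Type*} {D : V → V → Prop} {S : Set V}

@[simp]
theorem outBdry_singleton (v : V) : outBdry D {v} = outNbr D v := by
  simp [outBdry, outNbr]

theorem outNbr_sdiff_subset_outBdry {u : V} (hu : u ∈ S) : outNbr D u \ S ⊆ outBdry D S :=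
  fun _ hw => ⟨hw.2, u, hu, hw.1.2⟩

theorem outBdry_union_outNbr_subset {u : V} (hu : u ∈ S) :
    outBdry D (S ∪ outNbr D u) ⊆ (outBdry D S \ (outNbr D u \ S)) ∪ (outNbr2 D u \ S) := by
  rintro w ⟨hw, x, hx | hx, hxw⟩ <;> rw [Set.mem_union, not_or] at hw
  · exact Or.inl ⟨⟨hw.1, x, hx, hxw⟩, fun h => hw.2 h.1⟩
  · have hwu : w ≠ u := fun h => hw.1 (h ▸ hu)
    exact Or.inr ⟨⟨by simp [hwu, hw.2], x, hx, hxw⟩, hw.1⟩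

variable [Finite V]

theorem SeymourVertex.ncard_outNbr_inter_le {u : S} (hu : SeymourVertex (Subrel D (· ∈ S)) u) :
    (outNbr D u ∩ S).ncard ≤ (outNbr2 D u ∩ S).ncard := by
  have ncard_preimage (T : Set V) : (Subtype.val ⁻¹' T : Set S).ncard = (T ∩ S).ncard := by
    rw [← Set.ncard_image_of_injective _ Subtype.val_injective, Subtype.image_preimage_coe,
      Set.inter_comm]
  calc (outNbr D u ∩ S).ncard = (outNbr (Subrel D (· ∈ S)) u).ncard := by
        rw [← ncard_preimage, ← outNbr_preimage Subtype.val_injective]; rfl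
    _ ≤ (outNbr2 (Subrel D (· ∈ S)) u).ncard := hu
    _ ≤ (Subtype.val ⁻¹' outNbr2 D u : Set S).ncard :=
        Set.ncard_le_ncard (outNbr2_preimage_subset Subtype.val_injective u)
    _ = (outNbr2 D u ∩ S).ncard := ncard_preimage _

theorem SeymourVertex.ncard_outNbr2_sdiff_lt {u : S} (hu : SeymourVertex (Subrel D (· ∈ S)) u)
    (hu' : ¬ SeymourVertex D u) :
    (outNbr2 D u \ S).ncard < (outNbr D u \ S).ncard := by
  have h_inter := hu.ncard_outNbr_inter_le
  have h_out := Set.ncard_inter_add_ncard_sdiff_eq_ncard (outNbr D u) S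
  have h_out2 := Set.ncard_inter_add_ncard_sdiff_eq_ncard (outNbr2 D u) S
  rw [SeymourVertex, not_le] at hu'
  omega

theorem ncard_union_outNbr_le {u : V} (hu : u ∈ S) :
    (S ∪ outNbr D u).ncard ≤ S.ncard + (outBdry D S).ncard := by
  rw [← Set.union_sdiff_self]
  exact (Set.ncard_union_le _ _).trans <|
    Nat.add_le_add_left (Set.ncard_le_ncard (outNbr_sdiff_subset_outBdry hu)) _

theorem SeymourVertex.ncard_outBdry_union_lt {u : S} (hu : SeymourVertex (Subrel D (· ∈ S)) u)
    (hu' : ¬ SeymourVertex D u) :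
    (outBdry D (S ∪ outNbr D u)).ncard < (outBdry D S).ncard :=
  calc (outBdry D (S ∪ outNbr D u)).ncard
      ≤ (outBdry D S \ (outNbr D u \ S)).ncard + (outNbr2 D u \ S).ncard :=
        (Set.ncard_le_ncard (outBdry_union_outNbr_subset u.2)).trans (Set.ncard_union_le _ _)
    _ < (outBdry D S \ (outNbr D u \ S)).ncard + (outNbr D u \ S).ncard :=
        Nat.add_lt_add_left (hu.ncard_outNbr2_sdiff_lt hu') _
    _ = (outBdry D S).ncard :=
        Set.ncard_sdiff_add_ncard_of_subset (outNbr_sdiff_subset_outBdry u.2)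

end Growth

section DegreeBounds

variable {V : Type*} [Finite V] {D : V → V → Prop}

theorem exists_ncard_outNbr_le_ncard_inNbr [Nonempty V] (D : V → V → Prop) :
    ∃ v, (outNbr D v).ncard ≤ (inNbr D v).ncard := by
  classical
  have := Fintype.ofFinite V
  have sum_eq : ∑ v, (outNbr D v).ncard = ∑ v, (inNbr D v).ncard := by
    have h := Finset.sum_card_bipartiteAbove_eq_sum_card_bipartiteBelow (s := Finset.univ)
      (t := Finset.univ) fun v w => w ≠ v ∧ D v w
    simpa [outNbr, inNbr, Set.ncard_eq_toFinset_card', Finset.bipartiteAbove,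
      Finset.bipartiteBelow, ne_comm] using h
  obtain ⟨v, -, hv⟩ := Finset.exists_le_of_sum_le Finset.univ_nonempty sum_eq.le
  exact ⟨v, hv⟩

theorem OrientedGraph.ncard_outNbr_add_ncard_inNbr_lt (hD : OrientedGraph D) (v : V) :
    (outNbr D v).ncard + (inNbr D v).ncard < Nat.card V := by
  have h_disj : Disjoint (outNbr D v) (inNbr D v) :=
    Set.disjoint_left.mpr fun w h_out h_in => hD v w h_out.2 h_in.2
  rw [← Set.ncard_union_eq h_disj]
  have hv : v ∉ outNbr D v ∪ inNbr D v := by simp [outNbr, inNbr]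
  exact Set.ncard_lt_card fun h => hv (h ▸ Set.mem_univ v)

theorem OrientedGraph.exists_two_mul_ncard_outNbr_lt [Nonempty V] (hD : OrientedGraph D) :
    ∃ v, 2 * (outNbr D v).ncard < Nat.card V := by
  obtain ⟨v, hv⟩ := exists_ncard_outNbr_le_ncard_inNbr D
  have h_sum := hD.ncard_outNbr_add_ncard_inNbr_lt v
  exact ⟨v, by omega⟩

namespace SeymourCritical

theorem exists_ncard_outBdry_union_lt (hcrit : SeymourCritical D) {S : Set V} (hS : S.Nonempty)
    (hne : S ≠ Set.univ) :
    ∃ u ∈ S, (outBdry D (S ∪ outNbr D u)).ncard < (outBdry D S).ncard := by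
  obtain ⟨u, hu⟩ := hcrit.exists_seymourVertex S hS hne
  exact ⟨u, u.2, hu.ncard_outBdry_union_lt (hcrit.not_seymourVertex u)⟩

theorem card_le_ncard_add_choose (hcrit : SeymourCritical D) {S : Set V} (hS : S.Nonempty)
    {b : ℕ} (hb : (outBdry D S).ncard ≤ b) : Nat.card V ≤ S.ncard + (b + 1).choose 2 := by
  induction b generalizing S with
  | zero =>
    rcases eq_or_ne S Set.univ with rfl | hne
    · simp
    obtain ⟨u, -, h_lt⟩ := hcrit.exists_ncard_outBdry_union_lt hS hne
    omega
  | succ b ih =>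
    rcases eq_or_ne S Set.univ with rfl | hne
    · simp
    obtain ⟨u, hu, h_lt⟩ := hcrit.exists_ncard_outBdry_union_lt hS hne
    calc Nat.card V ≤ (S ∪ outNbr D u).ncard + (b + 1).choose 2 :=
          ih (hS.mono Set.subset_union_left) (by omega)
      _ ≤ S.ncard + (b + 1) + (b + 1).choose 2 :=
          Nat.add_le_add_right ((ncard_union_outNbr_le hu).trans (Nat.add_le_add_left hb _)) _
      _ = S.ncard + (b + 1 + 1).choose 2 := by
          rw [Nat.choose_succ_succ' (b + 1) 1, Nat.choose_one_right, add_assoc]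

theorem card_le_one_add_choose (hcrit : SeymourCritical D) (v : V) :
    Nat.card V ≤ 1 + ((outNbr D v).ncard + 1).choose 2 := by
  simpa using hcrit.card_le_ncard_add_choose (Set.singleton_nonempty v) le_rfl

theorem three_le_ncard_outNbr (hcrit : SeymourCritical D) (hD : OrientedGraph D) (v : V) :
    3 ≤ (outNbr D v).ncard := by
  have : Nonempty V := ⟨v⟩
  obtain ⟨u, hu⟩ := Finite.exists_min fun w => (outNbr D w).ncard
  refine le_trans ?_ (hu v)
  have h_pos : 0 < (outNbr D u).ncard :=
    Nat.zero_lt_of_lt (not_le.mp (hcrit.not_seymourVertex u))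
  have h_lt : 2 * (outNbr D u).ncard < Nat.card V := by
    obtain ⟨w, hw⟩ := hD.exists_two_mul_ncard_outNbr_lt
    exact (Nat.mul_le_mul_left 2 (hu w)).trans_lt hw
  have h_le := hcrit.card_le_one_add_choose u
  rw [Nat.choose_two_right] at h_le
  by_contra! h_small
  interval_cases (outNbr D u).ncard <;> omega

end SeymourCritical

end DegreeBounds

theorem one_add_choose_two_lt_sq {d : ℕ} (hd : 3 ≤ d) : 1 + (d + 1).choose 2 < d ^ 2 := by
  have h_choose : 2 * (d + 1).choose 2 ≤ (d + 1) * d := by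
    rw [Nat.choose_two_right]
    exact Nat.mul_div_le _ 2
  nlinarith

theorem stmt_3_general {V : Type*} [Finite V] (D : V → V → Prop) (hD : OrientedGraph D)
    (hcrit : SeymourCritical D) (v : V) : √(Nat.card V) < (outNbr D v).ncard := by
  have h_three := hcrit.three_le_ncard_outNbr hD v
  rw [Real.sqrt_lt' (by positivity)]
  exact_mod_cast (hcrit.card_le_one_add_choose v).trans_lt (one_add_choose_two_lt_sq h_three)

/-- a vertex-minimal counterexample to Seymour's conjecture has minimum
outdegree greater than `√n`. -/
theorem stmt_3 (n : ℕ) (D : Fin n → Fin n → Prop) (hD : OrientedGraph D)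
    (hno : ∀ v, ¬ SeymourVertex D v)
    (hmin : ∀ m : ℕ, 0 < m → m < n → ∀ D' : Fin m → Fin m → Prop,
      OrientedGraph D' → ∃ v, SeymourVertex D' v) :
    ∀ v, Real.sqrt n < ((outNbr D v).ncard : ℝ) :=
  fun v => by
    simpa using stmt_3_general D hD (hD.seymourCritical hno (by simpa using hmin)) v
end
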